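/- arXiv:math/9902059 — 2 statements merged into one kernel-verified Lean document; each statement's English description precedes it below -/
import Mathlib

section
/- Let n ≥ 1 and let λ, μ ∈ ℝⁿ be weakly decreasing n-tuples. Then the set { ν ∈ ℝⁿ : ν is weakly decreasing and there exist real symmetric n×n matrices A, B with spec(A) = λ, spec(B) = μ and spec(A+B) = ν } is a convex subset of ℝⁿ. -/
/-!
After adding multiples of the identity, the equation `A + B = C` between matrices with prescribed
spectra becomes `∑ j, Q j * diagonal (a j) * (Q j)ᵀ = 1` with orthogonal `Q j` and nonnegative
weakly decreasing `a j`. Its left-hand side is a combination of the projections to the steps of the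
flags spanned by the columns of the `Q j`, with the weights `a j k - a j (k + 1)`. Such an equation
is solvable if and only if *some* tuple of flags is semistable for these weights, that is, if the
weighted dimensions of the intersections of a subspace `S` with the steps of the flags never
add up to more than `dim S`, with equality for the whole space. Necessity is seen by taking the
trace of the equation compressed to `S`. For sufficiency, semistability bounds the function
`∑ i, c i * log (det ((L i)ᵀ * P * L i)) - log (det P)` of positive definite `P` from below, where
the `L i` are bases of the steps and the `c i` their weights. Let `P = hᵀ * h` be almost minimal,
and let `M` be the average of `1` and of the left-hand side of the equation for orthonormal bases
of the flags moved by `h`. The step from `P` to `hᵀ * M⁻¹ * h` adds at most `2 * log (det M)` to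
the function, so `log (det M)` is almost nonnegative. By compactness of the orthogonal group it is
nonnegative for some `Q`, and as `M` has trace `n` this forces `M = 1`.

For given flags semistability is a system of linear conditions on the weights, and it is generic:
on a line of tuples of matrices it holds at all but finitely many points as soon as it holds at one.
So two solvable spectra are semistable for a common tuple of flags, and then so are their
convex combinations.
-/

namespace HornConvex

open Module Matrix

section Genericity

variable {K V V' : Type*} [Field K] [AddCommGroup V] [Module K V] [AddCommGroup V'] [Module K V']
variable {ι : Type*} [Fintype ι] {W : ι → Type*} [∀ i, AddCommGroup (W i)] [∀ i, Module K (W i)]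

/-- Semistability of a family of linear maps `L i : W i → V` with weights `c i`. These are the
conditions under which the Brascamp–Lieb constant of the family is finite; for injective `L i` the
dimension of `L i ⁻¹ S` is that of `range (L i) ∩ S`. -/
structure Semistable (c : ι → ℝ) (L : ∀ i, W i →ₗ[K] V) : Prop where
  sum_finrank_comap_le : ∀ S : Submodule K V,
    ∑ i, c i * (finrank K (S.comap (L i)) : ℝ) ≤ (finrank K S : ℝ)
  sum_finrank_eq : ∑ i, c i * (finrank K (W i) : ℝ) = (finrank K V : ℝ)

theorem convex_setOf_semistable (L : ∀ i, W i →ₗ[K] V) : Convex ℝ {c | Semistable c L} := by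
  intro c hc c' hc' a b ha hb hab
  have sum_combo (d : ι → ℝ) : ∑ i, (a • c + b • c') i * d i =
      a * ∑ i, c i * d i + b * ∑ i, c' i * d i := by
    simp only [Pi.add_apply, Pi.smul_apply, smul_eq_mul, Finset.mul_sum, ← Finset.sum_add_distrib]
    exact Finset.sum_congr rfl fun i _ => by ring
  refine ⟨fun S => ?_, ?_⟩
  · rw [sum_combo, ← one_mul (finrank K S : ℝ), ← hab, add_mul]
    gcongr
    exacts [hc.sum_finrank_comap_le S, hc'.sum_finrank_comap_le S]
  · rw [sum_combo, hc.sum_finrank_eq, hc'.sum_finrank_eq, ← add_mul, hab, one_mul]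

theorem Semistable.finrank_range_le [FiniteDimensional K V] [∀ i, FiniteDimensional K (W i)]
    {c : ι → ℝ} {L : ∀ i, W i →ₗ[K] V} (h : Semistable c L) (A : V →ₗ[K] V') :
    (finrank K A.range : ℝ) ≤ ∑ i, c i * (finrank K (A ∘ₗ L i).range : ℝ) := by
  have rank_nullity (i : ι) : (finrank K (A ∘ₗ L i).range : ℝ) =
      finrank K (W i) - finrank K (A.ker.comap (L i)) := by
    rw [← LinearMap.ker_comp, ← (A ∘ₗ L i).finrank_range_add_finrank_ker]
    push_cast
    ring
  have rank_nullity_A : (finrank K A.range : ℝ) = finrank K V - finrank K A.ker := by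
    rw [← A.finrank_range_add_finrank_ker]
    push_cast
    ring
  simp only [rank_nullity, rank_nullity_A, mul_sub, Finset.sum_sub_distrib, h.sum_finrank_eq]
  linarith [h.sum_finrank_comap_le A.ker]

theorem finrank_map_add_finrank_comap {X Y Z : Type*} [AddCommGroup X] [Module K X]
    [AddCommGroup Y] [Module K Y] [FiniteDimensional K Y] [AddCommGroup Z] [Module K Z]
    {f : X →ₗ[K] Y} {g : Y →ₗ[K] Z} (hf : Function.Injective f) (hfg : f.range = g.ker)
    (T : Submodule K Y) : finrank K (T.map g) + finrank K (T.comap f) = finrank K T := by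
  rw [← (g.domRestrict T).finrank_range_add_finrank_ker, LinearMap.range_domRestrict,
    LinearMap.ker_domRestrict, ← hfg, ← Submodule.finrank_map_subtype_eq,
    Submodule.map_comap_subtype, ((T.comap f).equivMapOfInjective f hf).finrank_eq,
    Submodule.map_comap_eq, inf_comm]

/-- Evaluation at `s j`, for all `j`, of the `V`-valued polynomial with coefficients
`f : Fin M → V`. -/
def evalAt {N M : ℕ} (s : Fin N → K) : (Fin M → V) →ₗ[K] (Fin N → V) :=
  LinearMap.pi fun j => ∑ b : Fin M, s j ^ (b : ℕ) • LinearMap.proj b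

theorem evalAt_apply {N M : ℕ} (s : Fin N → K) (f : Fin M → V) (j : Fin N) :
    evalAt s f j = ∑ b : Fin M, s j ^ (b : ℕ) • f b := by
  simp [evalAt]

/-- Multiplication of a polynomial by the indeterminate. -/
def consZero {N : ℕ} : (Fin N → V) →ₗ[K] (Fin (N + 1) → V) :=
  LinearMap.pi (Fin.cons 0 LinearMap.proj)

/-- The same polynomial, with one more coefficient. -/
def snocZero {N : ℕ} : (Fin N → V) →ₗ[K] (Fin (N + 1) → V) :=
  LinearMap.pi (Fin.snoc LinearMap.proj 0)

theorem consZero_eq_cons {N : ℕ} (f : Fin N → V) :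
    consZero (K := K) f = (Fin.cons 0 f : Fin (N + 1) → V) := by
  ext b; cases b using Fin.cases <;> simp [consZero]

theorem snocZero_eq_snoc {N : ℕ} (f : Fin N → V) :
    snocZero (K := K) f = (Fin.snoc f 0 : Fin (N + 1) → V) := by
  ext b; cases b using Fin.lastCases <;> simp [snocZero]

theorem consZero_injective {N : ℕ} :
    Function.Injective (consZero : (Fin N → V) →ₗ[K] (Fin (N + 1) → V)) := fun f g h => by
  simpa [consZero_eq_cons] using h

theorem snocZero_injective {N : ℕ} :
    Function.Injective (snocZero : (Fin N → V) →ₗ[K] (Fin (N + 1) → V)) := fun f g h => by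
  simpa [snocZero_eq_snoc] using h

theorem range_consZero {N : ℕ} : (consZero : (Fin N → V) →ₗ[K] (Fin (N + 1) → V)).range =
    (LinearMap.proj 0 : (Fin (N + 1) → V) →ₗ[K] V).ker := by
  ext f
  simp only [LinearMap.mem_range, consZero_eq_cons, LinearMap.mem_ker, LinearMap.proj_apply]
  exact ⟨by rintro ⟨g, rfl⟩; rfl, fun h => ⟨Fin.tail f, h ▸ Fin.cons_self_tail f⟩⟩

theorem range_snocZero {N : ℕ} : (snocZero : (Fin N → V) →ₗ[K] (Fin (N + 1) → V)).range =
    (LinearMap.proj (Fin.last N) : (Fin (N + 1) → V) →ₗ[K] V).ker := by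
  ext f
  simp only [LinearMap.mem_range, snocZero_eq_snoc, LinearMap.mem_ker, LinearMap.proj_apply]
  exact ⟨by rintro ⟨g, rfl⟩; simp, fun h => ⟨Fin.init f, h ▸ Fin.snoc_init_self f⟩⟩

theorem evalAt_consZero {N M : ℕ} (s : Fin N → K) (f : Fin M → V) (j : Fin N) :
    evalAt s (consZero (K := K) f) j = s j • evalAt s f j := by
  simp [consZero_eq_cons, evalAt_apply, Fin.sum_univ_succ, pow_succ', mul_smul, Finset.smul_sum]

theorem evalAt_snocZero {N M : ℕ} (s : Fin N → K) (f : Fin M → V) :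
    evalAt s (snocZero (K := K) f) = evalAt s f := by
  ext j
  simp [snocZero_eq_snoc, evalAt_apply, Fin.sum_univ_castSucc]

theorem evalAt_injective {N : ℕ} {s : Fin N → K} (hs : Function.Injective s) :
    Function.Injective (evalAt s : (Fin N → V) →ₗ[K] (Fin N → V)) := by
  rw [← LinearMap.ker_eq_bot, LinearMap.ker_eq_bot']
  intro f hf
  have coord_eq_zero (φ : Dual K V) : (fun b => φ (f b)) = 0 :=
    eq_zero_of_forall_index_sum_pow_mul_eq_zero hs fun j => by
      simpa [evalAt_apply] using congrArg φ (congrFun hf j)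
  exact funext fun b => (Module.forall_dual_apply_eq_zero_iff K (f b)).1 fun φ =>
    congrFun (coord_eq_zero φ) b

theorem finrank_submodule_pi [FiniteDimensional K V] {N : ℕ} (S : Fin N → Submodule K V) :
    finrank K (Submodule.pi Set.univ S) = ∑ j, finrank K (S j) := by
  rw [← Module.finrank_pi_fintype]
  exact LinearEquiv.finrank_eq
    { toFun := fun f j => ⟨f.1 j, f.2 j trivial⟩
      invFun := fun f => ⟨fun j => f j, fun j _ => (f j).2⟩
      map_add' := fun _ _ => rfl
      map_smul' := fun _ _ => rfl }

/-- The `V`-valued polynomials with `M` coefficients whose values at the points `s j` lie in the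
subspaces `S j`. -/
def interpolants {N : ℕ} (M : ℕ) (s : Fin N → K) (S : Fin N → Submodule K V) :
    Submodule K (Fin M → V) :=
  (Submodule.pi Set.univ S).comap (evalAt s)

theorem mem_interpolants {N M : ℕ} {s : Fin N → K} {S : Fin N → Submodule K V} {f : Fin M → V} :
    f ∈ interpolants M s S ↔ ∀ j, evalAt s f j ∈ S j := by
  simp [interpolants]

theorem finrank_interpolants [FiniteDimensional K V] {N : ℕ} {s : Fin N → K}
    (hs : Function.Injective s) (S : Fin N → Submodule K V) :
    finrank K (interpolants N s S) = ∑ j, finrank K (S j) := by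
  let e : (Fin N → V) ≃ₗ[K] (Fin N → V) := LinearEquiv.ofInjectiveEndo _ (evalAt_injective hs)
  have comap_eq_map_symm : interpolants N s S =
      (Submodule.pi Set.univ S).map (e.symm : (Fin N → V) →ₗ[K] (Fin N → V)) :=
    Submodule.comap_equiv_eq_map_symm e _
  rw [comap_eq_map_symm, LinearEquiv.finrank_map_eq, finrank_submodule_pi]

theorem finrank_interpolants_succ_le [FiniteDimensional K V] {N : ℕ} {s : Fin N → K}
    (hs : Function.Injective s) (S : Fin N → Submodule K V) :
    finrank K (interpolants (N + 1) s S) ≤ finrank K V + ∑ j, finrank K (S j) := by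
  have comap_snocZero : (interpolants (N + 1) s S).comap snocZero = interpolants N s S := by
    ext f
    simp only [Submodule.mem_comap, mem_interpolants, evalAt_snocZero]
  rw [← finrank_map_add_finrank_comap snocZero_injective range_snocZero, comap_snocZero,
    finrank_interpolants hs]
  gcongr
  exact Submodule.finrank_le _

/-- Multiplication by the pencil `L + s • L'`, from `W`-valued polynomials in `s` with `N`
coefficients to `V`-valued ones with `N + 1` coefficients. -/
def pencilMul {W : Type*} [AddCommGroup W] [Module K W] (L L' : W →ₗ[K] V) (N : ℕ) :
    (Fin N → W) →ₗ[K] (Fin (N + 1) → V) :=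
  snocZero ∘ₗ L.compLeft (Fin N) + consZero ∘ₗ L'.compLeft (Fin N)

section PencilMul

variable {W : Type*} [AddCommGroup W] [Module K W] (L L' : W →ₗ[K] V)

theorem pencilMul_apply_zero {N : ℕ} (f : Fin (N + 1) → W) :
    pencilMul L L' (N + 1) f 0 = L (f 0) := by
  simp [pencilMul, consZero_eq_cons, snocZero_eq_snoc, Fin.snoc, LinearMap.compLeft_apply]

theorem pencilMul_consZero {N : ℕ} (f : Fin N → W) :
    pencilMul L L' (N + 1) (consZero (K := K) f) = consZero (K := K) (pencilMul L L' N f) := by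
  have compLeft_consZero (A : W →ₗ[K] V) : A.compLeft (Fin (N + 1)) (consZero (K := K) f) =
      consZero (K := K) (A.compLeft (Fin N) f) := by
    ext b; cases b using Fin.cases <;> simp [consZero_eq_cons]
  have snocZero_consZero (g : Fin N → V) :
      snocZero (K := K) (consZero (K := K) g) = consZero (K := K) (snocZero (K := K) g) := by
    simp only [consZero_eq_cons, snocZero_eq_snoc, Fin.cons_snoc_eq_snoc_cons]
  simp only [pencilMul, LinearMap.add_apply, LinearMap.comp_apply, compLeft_consZero,
    snocZero_consZero, map_add]

theorem evalAt_pencilMul {M N : ℕ} (s : Fin M → K) (f : Fin N → W) (j : Fin M) :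
    evalAt s (pencilMul L L' N f) j = (L + s j • L') (evalAt s f j) := by
  have evalAt_compLeft (A : W →ₗ[K] V) : evalAt s (A.compLeft (Fin N) f) j = A (evalAt s f j) := by
    simp [evalAt_apply]
  rw [pencilMul, LinearMap.add_apply, map_add, Pi.add_apply, LinearMap.comp_apply,
    LinearMap.comp_apply, evalAt_snocZero, evalAt_consZero, evalAt_compLeft, evalAt_compLeft]
  rfl

end PencilMul

/-- Comparing lowest coefficients: `pencilMul` acts on them by `L i`. -/
theorem Semistable.sum_finrank_le_of_le_comap_pencilMul [FiniteDimensional K V]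
    [∀ i, FiniteDimensional K (W i)] {c : ι → ℝ} (hc : ∀ i, 0 ≤ c i) {L L' : ∀ i, W i →ₗ[K] V}
    (h : Semistable c L) {N : ℕ} (T : Submodule K (Fin (N + 1) → V))
    (U : ∀ i, Submodule K (Fin N → W i)) (hU : ∀ i, U i ≤ T.comap (pencilMul (L i) (L' i) N)) :
    ∑ i, c i * (finrank K (U i) : ℝ) ≤ (finrank K T : ℝ) := by
  induction N with
  | zero => simp [Module.finrank_zero_of_subsingleton]
  | succ N ih =>
    have lowest (i : ι) : (U i).map (LinearMap.proj 0) ≤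
        (T.map (LinearMap.proj 0)).comap (L i) := by
      rintro _ ⟨f, hf, rfl⟩
      exact ⟨_, hU i hf, pencilMul_apply_zero (L i) (L' i) f⟩
    have higher := ih (T.comap consZero) (fun i => (U i).comap consZero) fun i f hf => by
      simpa [pencilMul_consZero] using hU i hf
    calc ∑ i, c i * (finrank K (U i) : ℝ)
        = ∑ i, c i * (finrank K ((U i).map (LinearMap.proj 0)) : ℝ) +
            ∑ i, c i * (finrank K ((U i).comap consZero) : ℝ) := by
          rw [← Finset.sum_add_distrib]
          refine Finset.sum_congr rfl fun i _ => ?_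
          rw [← mul_add, ← finrank_map_add_finrank_comap consZero_injective range_consZero (U i)]
          push_cast
          rfl
      _ ≤ finrank K (T.map (LinearMap.proj 0 : (Fin (N + 2) → V) →ₗ[K] V)) +
            finrank K (T.comap consZero) := by
          refine add_le_add (le_trans ?_ (h.sum_finrank_comap_le _)) higher
          gcongr with i
          · exact hc i
          · exact Submodule.finrank_mono (lowest i)
      _ = finrank K T := by
          rw [← finrank_map_add_finrank_comap consZero_injective range_consZero T]
          push_cast
          rfl

/-- Multiplication by the pencil maps interpolants of the preimages of the `S j` to interpolants of
the `S j`. -/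
theorem Semistable.sum_sum_finrank_comap_pencil_le [FiniteDimensional K V]
    [∀ i, FiniteDimensional K (W i)] {c : ι → ℝ} (hc : ∀ i, 0 ≤ c i) {L : ∀ i, W i →ₗ[K] V}
    (h : Semistable c L) (L' : ∀ i, W i →ₗ[K] V) {N : ℕ} {s : Fin N → K}
    (hs : Function.Injective s) (S : Fin N → Submodule K V) :
    ∑ j, ∑ i, c i * (finrank K ((S j).comap (L i + s j • L' i)) : ℝ) ≤
      finrank K V + ∑ j, (finrank K (S j) : ℝ) := by
  let U (i : ι) : Submodule K (Fin N → W i) :=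
    interpolants N s fun j => (S j).comap (L i + s j • L' i)
  have pencilMul_mem (i : ι) :
      U i ≤ (interpolants (N + 1) s S).comap (pencilMul (L i) (L' i) N) := fun f hf =>
    mem_interpolants.2 fun j => by
      rw [evalAt_pencilMul]
      exact mem_interpolants.1 hf j
  calc ∑ j, ∑ i, c i * (finrank K ((S j).comap (L i + s j • L' i)) : ℝ)
      = ∑ i, c i * (finrank K (U i) : ℝ) := by
        rw [Finset.sum_comm]
        simp only [U, finrank_interpolants hs, Nat.cast_sum, Finset.mul_sum]
    _ ≤ finrank K (interpolants (N + 1) s S) :=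
        h.sum_finrank_le_of_le_comap_pencilMul hc _ U pencilMul_mem
    _ ≤ finrank K V + ∑ j, (finrank K (S j) : ℝ) := by
        exact_mod_cast finrank_interpolants_succ_le hs S

theorem exists_gap_of_finrank_lt_sum [FiniteDimensional K V] [∀ i, FiniteDimensional K (W i)]
    (c : ι → ℝ) : ∃ δ > 0, ∀ (L : ∀ i, W i →ₗ[K] V) (S : Submodule K V),
      (finrank K S : ℝ) < ∑ i, c i * (finrank K (S.comap (L i)) : ℝ) →
      finrank K S + δ ≤ ∑ i, c i * (finrank K (S.comap (L i)) : ℝ) := by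
  let defect (x : (∀ i, Fin (finrank K (W i) + 1)) × Fin (finrank K V + 1)) : ℝ :=
    ∑ i, c i * (x.1 i : ℝ) - (x.2 : ℝ)
  have finite_defects : (Set.range defect ∩ Set.Ioi 0).Finite :=
    (Set.finite_range defect).inter_of_left _
  obtain ⟨δ, hδ_pos, hδ⟩ : ∃ δ > 0, ∀ x, 0 < defect x → δ ≤ defect x := by
    rcases (Set.range defect ∩ Set.Ioi 0).eq_empty_or_nonempty with hempty | hne
    · exact ⟨1, one_pos, fun x hx =>
        (Set.eq_empty_iff_forall_notMem.1 hempty _ ⟨⟨x, rfl⟩, hx⟩).elim⟩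
    · obtain ⟨δ, hδ, hmin⟩ := Set.exists_min_image _ id finite_defects hne
      exact ⟨δ, hδ.2, fun x hx => hmin _ ⟨⟨x, rfl⟩, hx⟩⟩
  refine ⟨δ, hδ_pos, fun L S hS => ?_⟩
  have := hδ (fun i => ⟨finrank K (S.comap (L i)), Nat.lt_succ_of_le (Submodule.finrank_le _)⟩,
    ⟨finrank K S, Nat.lt_succ_of_le (Submodule.finrank_le _)⟩) (sub_pos.2 hS)
  exact le_sub_iff_add_le'.1 this

theorem Semistable.finite_setOf_not_pencil [FiniteDimensional K V]
    [∀ i, FiniteDimensional K (W i)] {c : ι → ℝ} (hc : ∀ i, 0 ≤ c i) {L : ∀ i, W i →ₗ[K] V}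
    (h : Semistable c L) (L' : ∀ i, W i →ₗ[K] V) :
    {s : K | ¬ Semistable c fun i => L i + s • L' i}.Finite := by
  by_contra hinfinite
  obtain ⟨δ, hδ_pos, hδ⟩ := exists_gap_of_finrank_lt_sum (K := K) (V := V) (W := W) c
  obtain ⟨N, hN⟩ := exists_nat_gt ((finrank K V : ℝ) / δ)
  let s (j : Fin N) : K := Set.Infinite.natEmbedding _ hinfinite j
  have hs : Function.Injective s := fun j k hjk =>
    Fin.ext ((Set.Infinite.natEmbedding _ hinfinite).injective (Subtype.ext hjk))
  have unstable (j : Fin N) : ∃ S : Submodule K V,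
      finrank K S < ∑ i, c i * (finrank K (S.comap (L i + s j • L' i)) : ℝ) := by
    by_contra! hS
    exact (Set.Infinite.natEmbedding _ hinfinite j).2 ⟨hS, h.sum_finrank_eq⟩
  choose S hS using unstable
  have defect_ge : ∑ j, ((finrank K (S j) : ℝ) + δ) ≤
      ∑ j, ∑ i, c i * (finrank K ((S j).comap (L i + s j • L' i)) : ℝ) :=
    Finset.sum_le_sum fun j _ => hδ _ _ (hS j)
  have defect_le := h.sum_sum_finrank_comap_pencil_le hc L' hs S
  rw [div_lt_iff₀ hδ_pos] at hN
  simp only [Finset.sum_add_distrib, Finset.sum_const, Finset.card_univ, Fintype.card_fin,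
    nsmul_eq_mul] at defect_ge
  linarith

end Genericity

section RealMatrices

theorem transpose_mul_diagonal_mul_apply {m n : Type*} [Fintype n] [DecidableEq n]
    (N : Matrix n m ℝ) (p : n → ℝ) (i j : m) :
    (Nᵀ * diagonal p * N) i j = ∑ r, N r i * p r * N r j := by
  rw [mul_apply]
  simp only [mul_diagonal, transpose_apply]

variable {m n : Type*} [Fintype m]

theorem posSemidef_transpose_mul_mul_same [Finite n] {P : Matrix m m ℝ} (hP : P.PosSemidef)
    (L : Matrix m n ℝ) : (Lᵀ * P * L).PosSemidef := by
  simpa only [conjTranspose_eq_transpose_of_trivial] using hP.conjTranspose_mul_mul_same L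

variable [Fintype n]

theorem posDef_transpose_mul_mul_same {P : Matrix m m ℝ} (hP : P.PosDef) {L : Matrix m n ℝ}
    (hL : Function.Injective L.mulVec) : (Lᵀ * P * L).PosDef := by
  simpa only [conjTranspose_eq_transpose_of_trivial] using hP.conjTranspose_mul_mul_same hL

variable [DecidableEq m]

theorem mulVec_injective_of_transpose_mul_self {F : Matrix n m ℝ} (hF : Fᵀ * F = 1) :
    Function.Injective F.mulVec :=
  Function.LeftInverse.injective (g := Fᵀ.mulVec) fun x => by rw [mulVec_mulVec, hF, one_mulVec]

theorem charpoly_conj_diagonal {Q : Matrix m m ℝ} (hQ : Qᵀ * Q = 1) (d : m → ℝ) :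
    (Q * diagonal d * Qᵀ).charpoly = ∏ i, (Polynomial.X - Polynomial.C (d i)) := by
  rw [mul_assoc, charpoly_mul_comm, mul_assoc, hQ, mul_one, charpoly_diagonal]

theorem isSymm_conj_diagonal (Q : Matrix m m ℝ) (d : m → ℝ) : (Q * diagonal d * Qᵀ).IsSymm := by
  simp [IsSymm, transpose_mul, mul_assoc]

theorem exists_eq_conj_diagonal_eigenvalues {A : Matrix m m ℝ} (hA : A.IsHermitian) :
    ∃ U : Matrix m m ℝ, Uᵀ * U = 1 ∧ A = U * diagonal hA.eigenvalues * Uᵀ := by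
  refine ⟨hA.eigenvectorUnitary, ?_, ?_⟩
  · simpa only [star_eq_conjTranspose, conjTranspose_eq_transpose_of_trivial] using
      Unitary.coe_star_mul_self hA.eigenvectorUnitary
  · have spectral := hA.spectral_theorem
    rwa [Unitary.conjStarAlgAut_apply, star_eq_conjTranspose,
      conjTranspose_eq_transpose_of_trivial] at spectral

theorem exists_eq_conj_of_charpoly_eq {A B : Matrix m m ℝ} (hA : A.IsSymm) (hB : B.IsSymm)
    (h : A.charpoly = B.charpoly) : ∃ Q : Matrix m m ℝ, Qᵀ * Q = 1 ∧ A = Q * B * Qᵀ := by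
  replace hA := isHermitian_iff_isSymm.2 hA
  replace hB := isHermitian_iff_isSymm.2 hB
  obtain ⟨U, hU, hAU⟩ := exists_eq_conj_diagonal_eigenvalues hA
  obtain ⟨V, hV, hBV⟩ := exists_eq_conj_diagonal_eigenvalues hB
  rw [(hA.eigenvalues_eq_eigenvalues_iff hB).2 h] at hAU
  refine ⟨U * Vᵀ, ?_, ?_⟩
  · rw [transpose_mul, transpose_transpose, mul_assoc, ← mul_assoc Uᵀ, hU, one_mul,
      mul_eq_one_comm.1 hV]
  · calc A = U * (Vᵀ * V) * diagonal hB.eigenvalues * (Vᵀ * V) * Uᵀ := by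
          rw [hV, mul_one, mul_one, ← hAU]
      _ = U * Vᵀ * B * (U * Vᵀ)ᵀ := by
          conv_rhs => rw [hBV]
          simp only [transpose_mul, transpose_transpose, mul_assoc]

theorem isSymm_and_charpoly_eq_iff {A : Matrix m m ℝ} {a : m → ℝ} :
    (A.IsSymm ∧ A.charpoly = ∏ i, (Polynomial.X - Polynomial.C (a i))) ↔
      ∃ Q : Matrix m m ℝ, Qᵀ * Q = 1 ∧ A = Q * diagonal a * Qᵀ := by
  constructor
  · rintro ⟨hA, h⟩
    exact exists_eq_conj_of_charpoly_eq hA (isSymm_diagonal a) (h.trans (charpoly_diagonal a).symm)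
  · rintro ⟨Q, hQ, rfl⟩
    exact ⟨isSymm_conj_diagonal Q a, charpoly_conj_diagonal hQ a⟩

theorem exists_eq_conj_diagonal_antitone {n : ℕ} {A : Matrix (Fin n) (Fin n) ℝ} (hA : A.IsSymm) :
    ∃ (Q : Matrix (Fin n) (Fin n) ℝ) (d : Fin n → ℝ), Qᵀ * Q = 1 ∧ Antitone d ∧
      A = Q * diagonal d * Qᵀ := by
  let d := (isHermitian_iff_isSymm.2 hA).eigenvalues
  let σ := Tuple.sort (-d)
  have charpoly_eq : A.charpoly = ∏ i, (Polynomial.X - Polynomial.C ((d ∘ σ) i)) :=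
    (isHermitian_iff_isSymm.2 hA).charpoly_eq.trans
      (Equiv.prod_comp σ fun i => Polynomial.X - Polynomial.C (d i)).symm
  obtain ⟨Q, hQ, hAQ⟩ := isSymm_and_charpoly_eq_iff.1 ⟨hA, charpoly_eq⟩
  exact ⟨Q, d ∘ σ, hQ, fun i j hij => neg_le_neg_iff.1 (Tuple.monotone_sort (-d) hij), hAQ⟩

open scoped MatrixOrder in
theorem exists_isUnit_eq_transpose_mul_self {P : Matrix m m ℝ} (hP : P.PosDef) :
    ∃ h : Matrix m m ℝ, IsUnit h ∧ P = hᵀ * h := by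
  obtain ⟨h, hPh⟩ := CStarAlgebra.nonneg_iff_eq_star_mul_self.1 hP.posSemidef.nonneg
  rw [star_eq_conjTranspose, conjTranspose_eq_transpose_of_trivial] at hPh
  exact ⟨h, isUnit_of_mul_isUnit_right (hPh ▸ hP.isUnit), hPh⟩

theorem log_det_eq_sum_log_eigenvalues {P : Matrix m m ℝ} (hP : P.PosDef) :
    Real.log P.det = ∑ i, Real.log (hP.isHermitian.eigenvalues i) := by
  rw [hP.isHermitian.det_eq_prod_eigenvalues, ← Real.log_prod fun i _ => (hP.eigenvalues_pos i).ne']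
  rfl

theorem trace_sub_card_eq_sum_eigenvalues_sub_one {P : Matrix m m ℝ} (hP : P.IsHermitian) :
    P.trace - Fintype.card m = ∑ i, (hP.eigenvalues i - 1) := by
  simp [hP.trace_eq_sum_eigenvalues]

theorem log_det_le_trace_sub_card {P : Matrix m m ℝ} (hP : P.PosDef) :
    Real.log P.det ≤ P.trace - Fintype.card m := by
  rw [log_det_eq_sum_log_eigenvalues hP, trace_sub_card_eq_sum_eigenvalues_sub_one hP.isHermitian]
  exact Finset.sum_le_sum fun i _ => Real.log_le_sub_one_of_pos (hP.eigenvalues_pos i)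

theorem eq_one_of_trace_sub_card_le_log_det {P : Matrix m m ℝ} (hP : P.PosDef)
    (h : P.trace - Fintype.card m ≤ Real.log P.det) : P = 1 := by
  have eigenvalues_eq_one : hP.isHermitian.eigenvalues = 1 := by
    by_contra hne
    obtain ⟨i, hi⟩ := Function.ne_iff.1 hne
    rw [log_det_eq_sum_log_eigenvalues hP,
      trace_sub_card_eq_sum_eigenvalues_sub_one hP.isHermitian] at h
    exact h.not_gt <| Finset.sum_lt_sum
      (fun i _ => Real.log_le_sub_one_of_pos (hP.eigenvalues_pos i))
      ⟨i, Finset.mem_univ i, Real.log_lt_sub_one_of_pos (hP.eigenvalues_pos i) hi⟩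
  obtain ⟨U, hU, hPU⟩ := exists_eq_conj_diagonal_eigenvalues hP.isHermitian
  rw [hPU, eigenvalues_eq_one, Pi.one_def, diagonal_one, mul_one, mul_eq_one_comm.1 hU]

theorem one_le_det_one_add {Y : Matrix m m ℝ} (hY : Y.PosSemidef) : 1 ≤ (1 + Y).det := by
  obtain ⟨U, hU, hYU⟩ := exists_eq_conj_diagonal_eigenvalues hY.isHermitian
  have det_eq : (1 + Y).det = ∏ i, (1 + hY.isHermitian.eigenvalues i) := by
    conv_lhs => rw [hYU, mul_assoc, det_one_add_mul_comm, mul_assoc, hU, mul_one, ← diagonal_one,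
      diagonal_add, det_diagonal]
  rw [det_eq]
  exact Finset.one_le_prod fun i _ => le_add_of_nonneg_right (hY.eigenvalues_nonneg i)

theorem det_le_det_add {A Y : Matrix m m ℝ} (hA : A.PosDef) (hY : Y.PosSemidef) :
    A.det ≤ (A + Y).det := by
  obtain ⟨h, hh, rfl⟩ := exists_isUnit_eq_transpose_mul_self hA
  have factor : hᵀ * h + Y = hᵀ * (1 + (h⁻¹)ᵀ * Y * h⁻¹) * h := by
    have hdet : IsUnit h.det := (isUnit_iff_isUnit_det h).1 hh
    have cancel : hᵀ * (h⁻¹)ᵀ = 1 := by rw [← transpose_mul, nonsing_inv_mul h hdet, transpose_one]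
    rw [mul_add, mul_one, add_mul, ← mul_assoc, ← mul_assoc, cancel, one_mul, mul_assoc Y,
      nonsing_inv_mul h hdet, mul_one]
  rw [factor, det_mul, det_mul, det_mul, det_transpose]
  have := one_le_det_one_add (posSemidef_transpose_mul_mul_same hY h⁻¹)
  nlinarith [mul_self_nonneg h.det]

variable [DecidableEq n]

/-- A weak form of the Cauchy–Binet formula. -/
theorem sq_det_submatrix_mul_prod_le_det {N : Matrix n m ℝ} {e : m → n}
    (he : (N.submatrix e id).det ≠ 0) {p : n → ℝ} (hp : ∀ r, 0 < p r) :
    (N.submatrix e id).det ^ 2 * ∏ x, p (e x) ≤ (Nᵀ * diagonal p * N).det := by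
  set B := N.submatrix e id with hB
  have e_injective : Function.Injective e := fun x y hxy => by
    by_contra hne
    exact he (det_zero_of_row_eq hne (funext fun z => by rw [hB, submatrix_apply, hxy]; rfl))
  let rest (r : n) : ℝ := if r ∈ Finset.univ.image e then 0 else p r
  have split : Nᵀ * diagonal p * N = Bᵀ * diagonal (p ∘ e) * B + Nᵀ * diagonal rest * N := by
    ext i j
    have sum_range : ∑ x, N (e x) i * p (e x) * N (e x) j =
        ∑ r, if r ∈ Finset.univ.image e then N r i * p r * N r j else 0 := by
      rw [← Finset.sum_filter, Finset.filter_mem_eq_inter, Finset.univ_inter,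
        Finset.sum_image e_injective.injOn]
    simp only [Matrix.add_apply, transpose_mul_diagonal_mul_apply, hB, submatrix_apply, id_eq,
      Function.comp_apply, sum_range, ← Finset.sum_add_distrib, rest]
    refine Finset.sum_congr rfl fun r _ => ?_
    split_ifs <;> ring
  have B_injective : Function.Injective B.mulVec :=
    mulVec_injective_of_isUnit ((isUnit_iff_isUnit_det B).2 he.isUnit)
  have chosen_posDef : (Bᵀ * diagonal (p ∘ e) * B).PosDef :=
    posDef_transpose_mul_mul_same (posDef_diagonal_iff.2 fun x => hp (e x)) B_injective
  have rest_nonneg : 0 ≤ rest := fun r => by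
    dsimp only [rest, Pi.zero_apply]
    split_ifs
    exacts [le_rfl, (hp r).le]
  calc B.det ^ 2 * ∏ x, p (e x) = (Bᵀ * diagonal (p ∘ e) * B).det := by
        simp only [det_mul, det_transpose, det_diagonal, Function.comp_apply]
        ring
    _ ≤ (Nᵀ * diagonal p * N).det := by
        rw [split]
        exact det_le_det_add chosen_posDef
          (posSemidef_transpose_mul_mul_same (posSemidef_diagonal_iff.2 rest_nonneg) N)

end RealMatrices

section Flags

variable {n : ℕ}

/-- The weight `a k - a (k + 1)`, with the convention `a n = 0`. These weights express an
antitone sequence as a combination of indicators of initial segments. -/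
def gap (a : Fin n → ℝ) (k : Fin n) : ℝ :=
  a k - if h : k.val + 1 < n then a ⟨k.val + 1, h⟩ else 0

theorem gap_nonneg {a : Fin n → ℝ} (ha : Antitone a) (ha0 : 0 ≤ a) (k : Fin n) : 0 ≤ gap a k := by
  rw [gap]
  split_ifs with h
  · exact sub_nonneg.2 (ha (Fin.le_def.2 (Nat.le_succ _)))
  · exact (ha0 k).trans_eq (sub_zero _).symm

theorem gap_add (a b : Fin n → ℝ) : gap (a + b) = gap a + gap b := by
  funext k
  simp only [gap, Pi.add_apply]
  split_ifs <;> ring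

theorem gap_smul (s : ℝ) (a : Fin n → ℝ) : gap (s • a) = s • gap a := by
  funext k
  simp only [gap, Pi.smul_apply, smul_eq_mul]
  split_ifs <;> ring

theorem sum_Ici_gap (a : Fin n → ℝ) (r : Fin n) : ∑ k ∈ Finset.Ici r, gap a k = a r := by
  let b (k : ℕ) : ℝ := if h : k < n then a ⟨k, h⟩ else 0
  have gap_eq (k : Fin n) : gap a k = b k - b (k + 1) := by simp [gap, b]
  calc ∑ k ∈ Finset.Ici r, gap a k = ∑ k ∈ Finset.Ico r.val n, (b k - b (k + 1)) := by
        simp only [gap_eq]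
        rw [← Fin.map_valEmbedding_Ici, Finset.sum_map]
        rfl
    _ = a r := by
        rw [Finset.sum_Ico_eq_sum_range, Finset.sum_congr rfl fun k _ => by rw [add_assoc],
          Finset.sum_range_sub' fun k => b (r + k)]
        simp [b, r.isLt.le]

theorem sum_gap_smul_sum_Iic {E : Type*} [AddCommGroup E] [Module ℝ E] (a : Fin n → ℝ)
    (f : Fin n → E) : ∑ k, gap a k • ∑ r ∈ Finset.Iic k, f r = ∑ r, a r • f r := by
  simp only [Finset.smul_sum]
  rw [Finset.sum_comm' (t' := Finset.univ) (s' := Finset.Ici) (by simp)]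
  exact Finset.sum_congr rfl fun r _ => by rw [← Finset.sum_smul, sum_Ici_gap]

theorem sum_mul_nonneg_of_antitone {f w : Fin n → ℝ} (hf : Antitone f)
    (hw : ∀ k, 0 ≤ ∑ r ∈ Finset.Iic k, w r) (hw0 : ∑ r, w r = 0) : 0 ≤ ∑ r, f r * w r := by
  simp only [← smul_eq_mul]
  rw [← sum_gap_smul_sum_Iic]
  refine Finset.sum_nonneg fun k _ => ?_
  by_cases hk : k.val + 1 < n
  · refine smul_nonneg ?_ (hw k)
    rw [gap, dif_pos hk]
    exact sub_nonneg.2 (hf (Fin.le_def.2 (Nat.le_succ _)))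
  · have Iic_eq_univ : Finset.Iic k = Finset.univ :=
      Finset.eq_univ_of_forall fun r => Finset.mem_Iic.2 (Fin.le_def.2 (by lia))
    rw [Iic_eq_univ, hw0, smul_zero]

/-- The matrix formed by the columns of `g` with index at most `k`. The ranges of the matrices
`leadingCols g k` form the flag spanned by the columns of `g`. -/
def leadingCols (g : Matrix (Fin n) (Fin n) ℝ) (k : Fin n) : Matrix (Fin n) (Finset.Iic k) ℝ :=
  g.submatrix id Subtype.val

theorem mul_diagonal_mul_transpose_eq_sum_gap_smul (Q : Matrix (Fin n) (Fin n) ℝ)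
    (a : Fin n → ℝ) :
    Q * diagonal a * Qᵀ = ∑ k, gap a k • (leadingCols Q k * (leadingCols Q k)ᵀ) := by
  ext x y
  calc (Q * diagonal a * Qᵀ) x y = ∑ r, a r • (Q x r * Q y r) := by
        rw [mul_apply]
        simp only [mul_diagonal, transpose_apply, smul_eq_mul]
        exact Finset.sum_congr rfl fun r _ => by ring
    _ = ∑ k, gap a k • ∑ r ∈ Finset.Iic k, Q x r * Q y r := (sum_gap_smul_sum_Iic a _).symm
    _ = _ := by
        rw [Matrix.sum_apply]
        exact Finset.sum_congr rfl fun k _ =>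
          congrArg (gap a k • ·) (Finset.sum_coe_sort _ fun r => Q x r * Q y r).symm

theorem leadingCols_transpose_mul_self {Q : Matrix (Fin n) (Fin n) ℝ} (hQ : Qᵀ * Q = 1)
    (k : Fin n) : (leadingCols Q k)ᵀ * leadingCols Q k = 1 := by
  rw [leadingCols, transpose_submatrix, ← submatrix_mul _ _ _ _ _ Function.bijective_id, hQ,
    submatrix_one _ Subtype.val_injective]

theorem leadingCols_mul (h g : Matrix (Fin n) (Fin n) ℝ) (k : Fin n) :
    leadingCols (h * g) k = h * leadingCols g k := rfl

theorem leadingCols_mul_of_blockTriangular (Q : Matrix (Fin n) (Fin n) ℝ)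
    {R : Matrix (Fin n) (Fin n) ℝ} (hR : R.BlockTriangular id) (k : Fin n) :
    leadingCols (Q * R) k = leadingCols Q k * R.submatrix Subtype.val Subtype.val := by
  ext x y
  change ∑ r, Q x r * R r y = ∑ r : Finset.Iic k, Q x r * R r y
  rw [Finset.sum_coe_sort (Finset.Iic k) fun r => Q x r * R r y]
  refine (Finset.sum_subset (Finset.subset_univ _) fun r _ hr => ?_).symm
  rw [hR ((Finset.mem_Iic.1 y.2).trans_lt (not_le.1 (mt Finset.mem_Iic.2 hr))), mul_zero]

theorem mulVec_leadingCols_injective {g : Matrix (Fin n) (Fin n) ℝ} (hg : IsUnit g) (k : Fin n) :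
    Function.Injective (leadingCols g k).mulVec := by
  have leadingCols_one_injective : Function.Injective (leadingCols (1 : Matrix _ _ ℝ) k).mulVec :=
    mulVec_injective_of_transpose_mul_self (leadingCols_transpose_mul_self (by simp) k)
  rw [← mul_one g, leadingCols_mul]
  intro x y hxy
  simp only [← mulVec_mulVec] at hxy
  exact leadingCols_one_injective (mulVec_injective_of_isUnit hg hxy)

theorem exists_eq_mul_blockTriangular (g : Matrix (Fin n) (Fin n) ℝ) :
    ∃ Q R : Matrix (Fin n) (Fin n) ℝ, Qᵀ * Q = 1 ∧ R.BlockTriangular id ∧ g = Q * R := by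
  let f (k : Fin n) : EuclideanSpace ℝ (Fin n) := WithLp.toLp 2 (gᵀ k)
  let b := InnerProductSpace.gramSchmidtOrthonormalBasis (𝕜 := ℝ) (by simp) f
  refine ⟨of fun x r => b r x, of fun r k => inner ℝ (b r) (f k), ?_,
    fun r c hc => InnerProductSpace.gramSchmidtOrthonormalBasis_inv_triangular _ f hc, ?_⟩
  · ext i j
    have orthonormal := orthonormal_iff_ite.1 b.orthonormal i j
    rw [PiLp.inner_apply] at orthonormal
    simp only [mul_apply, transpose_apply, of_apply, one_apply, ← orthonormal]
    exact Finset.sum_congr rfl fun x _ => mul_comm _ _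
  · ext x k
    have expansion := congrArg (fun v : EuclideanSpace ℝ (Fin n) => v x) (b.sum_repr (f k))
    simp only [WithLp.ofLp_sum, Finset.sum_apply, b.repr_apply_apply] at expansion
    exact expansion.symm.trans (Finset.sum_congr rfl fun r _ => mul_comm _ _)

end Flags

section GreedyRows

variable {K V ι : Type*} [Field K] [AddCommGroup V] [Module K V] [LinearOrder ι]

theorem linearIndepOn_of_notMem_span_Iio {v : ι → V} {T : Finset ι}
    (hT : ∀ r ∈ T, v r ∉ Submodule.span K (v '' Set.Iio r)) : LinearIndepOn K v (T : Set ι) := by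
  induction T using Finset.induction_on_max with
  | empty => simpa only [Finset.coe_empty] using linearIndepOn_empty K v
  | insert r T hr ih =>
    rw [Finset.coe_insert]
    refine (ih fun s hs => hT s (Finset.mem_insert_of_mem hs)).insert fun hmem => ?_
    exact hT r (Finset.mem_insert_self r T) (Submodule.span_mono (Set.image_mono hr) hmem)

theorem exists_linearIndepOn_forall_mem_span [Finite ι] (v : ι → V) :
    ∃ T : Finset ι, LinearIndepOn K v (T : Set ι) ∧
      ∀ k, v '' Set.Iic k ⊆ Submodule.span K (v '' {r ∈ T | r ≤ k}) := by
  classical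
  have := Fintype.ofFinite ι
  let T : Finset ι := {r | v r ∉ Submodule.span K (v '' Set.Iio r)}
  refine ⟨T, linearIndepOn_of_notMem_span_Iio fun r hr => (Finset.mem_filter.1 hr).2, fun k => ?_⟩
  rw [Set.image_subset_iff]
  intro r
  induction r using WellFoundedLT.induction with
  | ind r ih =>
    intro (hr : r ≤ k)
    by_cases hrT : r ∈ T
    · exact Submodule.subset_span ⟨r, ⟨hrT, hr⟩, rfl⟩
    · have mem_span_earlier : v r ∈ Submodule.span K (v '' Set.Iio r) := by
        simpa only [T, Finset.mem_filter_univ, not_not] using hrT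
      refine Submodule.span_le.2 ?_ mem_span_earlier
      rintro _ ⟨s, hs, rfl⟩
      exact ih s hs ((le_of_lt hs).trans hr)

theorem rank_submatrix_le_card {l m n : Type*} [Finite l] [Fintype m] {N : Matrix n m K}
    {f : l → n} {J : Finset n} (hf : ∀ x, N.row (f x) ∈ Submodule.span K (N.row '' J)) :
    (N.submatrix f id).rank ≤ J.card := by
  classical
  have span_le : Submodule.span K (Set.range (N.submatrix f id).row) ≤
      Submodule.span K (J.image N.row : Finset (m → K)) := by
    rw [Finset.coe_image, Submodule.span_le]
    rintro _ ⟨x, rfl⟩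
    exact hf x
  calc (N.submatrix f id).rank = finrank K _ := rank_eq_finrank_span_row _
    _ ≤ _ := Submodule.finrank_mono span_le
    _ ≤ (J.image N.row).card := finrank_span_finset_le_card _
    _ ≤ J.card := Finset.card_image_le

theorem exists_det_submatrix_ne_zero_rank_le [Finite ι] [LocallyFiniteOrderBot ι]
    {m : Type*} [Fintype m] [DecidableEq m] {N : Matrix ι m K}
    (hN : Function.Injective N.mulVec) :
    ∃ e : m → ι, (N.submatrix e id).det ≠ 0 ∧
      ∀ k, (N.submatrix (Subtype.val : Finset.Iic k → ι) id).rank ≤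
        (Finset.univ.filter fun x => e x ≤ k).card := by
  obtain ⟨T, T_indep, T_span⟩ := exists_linearIndepOn_forall_mem_span (K := K) N.row
  have card_T : Fintype.card m = Fintype.card T := by
    rw [Fintype.card_coe]
    refine le_antisymm ?_ ?_
    · have rank_le : N.rank ≤ T.card := rank_submatrix_le_card (f := id) fun r =>
        Submodule.span_mono (Set.image_mono (Set.sep_subset _ _))
          (T_span r ⟨r, Set.self_mem_Iic, rfl⟩)
      rwa [Matrix.rank, LinearMap.finrank_range_of_inj (f := N.mulVecLin) hN,
        finrank_fintype_fun_eq_card] at rank_le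
    · simpa only [finrank_fintype_fun_eq_card, Finset.coe_sort_coe, Fintype.card_coe] using
        LinearIndependent.fintype_card_le_finrank T_indep
  let e := Fintype.equivOfCardEq card_T
  refine ⟨fun x => e x, ?_, fun k => ?_⟩
  · have rows_indep : LinearIndependent K (N.submatrix (fun x => (e x).val) id).row :=
      T_indep.comp e e.injective
    exact ((isUnit_iff_isUnit_det _).1 (linearIndependent_rows_iff_isUnit.1 rows_indep)).ne_zero
  · have rank_le_card : (N.submatrix (Subtype.val : Finset.Iic k → ι) id).rank ≤
        (T.filter (· ≤ k)).card := rank_submatrix_le_card fun r => by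
      rw [Finset.coe_filter]
      exact T_span k ⟨r, Finset.mem_Iic.1 r.2, rfl⟩
    refine rank_le_card.trans (Finset.card_le_card_of_surjOn (fun x => (e x).val) fun r hr => ?_)
    obtain ⟨hrT, hrk⟩ := Finset.mem_filter.1 hr
    exact ⟨e.symm ⟨r, hrT⟩, by simpa using hrk, by simp⟩

end GreedyRows

section Compactness

theorem isCompact_setOf_transpose_mul_self_eq_one {m : Type*} [Fintype m] [DecidableEq m] :
    IsCompact {Q : Matrix m m ℝ | Qᵀ * Q = 1} := by
  have entries_mem : {Q : Matrix m m ℝ | Qᵀ * Q = 1} ⊆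
      Set.univ.pi fun _ => Set.univ.pi fun _ => Set.Icc (-1 : ℝ) 1 := by
    intro Q hQ i _ j _
    have hjj : ∑ x, Q x j * Q x j = 1 := by
      simpa only [mul_apply, transpose_apply, one_apply_eq] using congrFun (congrFun hQ j) j
    refine abs_le.1 (abs_le_one_iff_mul_self_le_one.2 (hjj ▸ ?_))
    exact Finset.single_le_sum (f := fun x => Q x j * Q x j) (fun x _ => mul_self_nonneg _)
      (Finset.mem_univ i)
  refine IsCompact.of_isClosed_subset ?_ (isClosed_eq (by fun_prop) continuous_const) entries_mem
  exact isCompact_univ_pi fun _ => isCompact_univ_pi fun _ => isCompact_Icc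

theorem exists_pos_forall_exists_forall_le {X E ι : Type*} [TopologicalSpace X] [Finite ι]
    {s : Set X} (hs : IsCompact s) {S : Set E} {f : E → ι → X → ℝ}
    (hf : ∀ e i, Continuous (f e i)) (hpos : ∀ x ∈ s, ∃ e ∈ S, ∀ i, 0 < f e i x) :
    ∃ κ > 0, ∀ x ∈ s, ∃ e ∈ S, ∀ i, κ ≤ f e i x := by
  refine hs.induction_on (p := fun t => ∃ κ > 0, ∀ x ∈ t, ∃ e ∈ S, ∀ i, κ ≤ f e i x)
    ⟨1, one_pos, by simp⟩ ?_ ?_ ?_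
  · rintro t u htu ⟨κ, hκ, h⟩
    exact ⟨κ, hκ, fun x hx => h x (htu hx)⟩
  · rintro t u ⟨κ, hκ, ht⟩ ⟨δ, hδ, hu⟩
    refine ⟨min κ δ, lt_min hκ hδ, ?_⟩
    rintro x (hx | hx)
    · obtain ⟨e, he, hex⟩ := ht x hx
      exact ⟨e, he, fun i => (min_le_left κ δ).trans (hex i)⟩
    · obtain ⟨e, he, hex⟩ := hu x hx
      exact ⟨e, he, fun i => (min_le_right κ δ).trans (hex i)⟩
  · intro x hx
    obtain ⟨e, he, hex⟩ := hpos x hx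
    obtain ⟨κ, hκ, hκx⟩ : ∃ κ, 0 < κ ∧ ∀ i, κ < f e i x :=
      (eventually_mem_nhdsWithin.and <| Filter.eventually_all.2 fun i =>
        (Filter.Eventually.filter_mono nhdsWithin_le_nhds (gt_mem_nhds (hex i)))).exists
        (f := nhdsWithin (0 : ℝ) (Set.Ioi 0))
    refine ⟨_, mem_nhdsWithin_of_mem_nhds (Filter.eventually_all.2 fun i =>
      (hf e i).continuousAt.eventually (lt_mem_nhds (hκx i))), κ, hκ, fun y hy => ?_⟩
    exact ⟨e, he, fun i => (hy i).le⟩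

end Compactness

section LowerBound

theorem log_sq_add_sum_log_le_log_det {m n : Type*} [Fintype m] [DecidableEq m] [Fintype n]
    [DecidableEq n] {N : Matrix n m ℝ} {e : m → n} {κ : ℝ} (hκ : 0 < κ)
    (he : κ ≤ |(N.submatrix e id).det|) {p : n → ℝ} (hp : ∀ r, 0 < p r) :
    Real.log (κ ^ 2) + ∑ x, Real.log (p (e x)) ≤ Real.log (Nᵀ * diagonal p * N).det := by
  have prod_pos : 0 < ∏ x, p (e x) := Finset.prod_pos fun x _ => hp _
  rw [← Real.log_prod fun x _ => (hp _).ne', ← Real.log_mul (by positivity) prod_pos.ne']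
  refine Real.log_le_log (by positivity) ?_
  calc κ ^ 2 * ∏ x, p (e x) ≤ |(N.submatrix e id).det| ^ 2 * ∏ x, p (e x) := by gcongr
    _ ≤ (Nᵀ * diagonal p * N).det := by
        rw [sq_abs]
        exact sq_det_submatrix_mul_prod_le_det (abs_pos.1 (hκ.trans_le he)) hp

variable {n : ℕ} {ι : Type*} [Fintype ι] {m : ι → Type*} [∀ i, Fintype (m i)]

/-- Selections `e i : m i → Fin n` of rows that, counted with the weights `c i`, hit each initial
segment of `Fin n` at least as often as its number of elements. -/
def admissibleRows (c : ι → ℝ) : Set (∀ i, m i → Fin n) :=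
  {e | ∀ k, (k.val + 1 : ℝ) ≤ ∑ i, c i * (Finset.univ.filter fun x => e i x ≤ k).card}

theorem sum_le_of_mem_admissibleRows {c : ι → ℝ} {e : ∀ i, m i → Fin n}
    (he : e ∈ admissibleRows c) (hcard : ∑ i, c i * Fintype.card (m i) = n) {f : Fin n → ℝ}
    (hf : Antitone f) : ∑ r, f r ≤ ∑ i, c i * ∑ x, f (e i x) := by
  let w (r : Fin n) : ℝ := ∑ i, c i * (Finset.univ.filter fun x => e i x = r).card - 1
  have sum_mul_w (f : Fin n → ℝ) : ∑ r, f r * w r = ∑ i, c i * ∑ x, f (e i x) - ∑ r, f r := by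
    simp only [w, mul_sub, mul_one, Finset.sum_sub_distrib, Finset.mul_sum]
    rw [Finset.sum_comm]
    refine congrArg (· - ∑ r, f r) (Finset.sum_congr rfl fun i _ => ?_)
    rw [← Finset.sum_fiberwise' Finset.univ (e i) fun r => c i * f r]
    exact Finset.sum_congr rfl fun r _ => by rw [Finset.sum_const, nsmul_eq_mul]; ring
  have partial_sums_nonneg (k : Fin n) : 0 ≤ ∑ r ∈ Finset.Iic k, w r := by
    have sum_Iic_w := sum_mul_w fun r => if r ≤ k then 1 else 0
    simp only [Finset.sum_boole, ite_mul, one_mul, zero_mul] at sum_Iic_w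
    rw [← Finset.sum_filter, Finset.filter_ge_eq_Iic, Fin.card_Iic] at sum_Iic_w
    rw [sum_Iic_w, sub_nonneg]
    exact_mod_cast he k
  have total_eq_zero : ∑ r, w r = 0 := by
    have := sum_mul_w fun _ => 1
    simpa [hcard] using this
  have := sum_mul_nonneg_of_antitone hf partial_sums_nonneg total_eq_zero
  rwa [sum_mul_w, sub_nonneg] at this

variable [∀ i, DecidableEq (m i)] {c : ι → ℝ} {L : ∀ i, Matrix (Fin n) (m i) ℝ}

theorem Semistable.exists_mem_admissibleRows (h : Semistable c fun i => (L i).mulVecLin)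
    (hc : ∀ i, 0 ≤ c i) (hL : ∀ i, Function.Injective (L i).mulVec)
    {Q : Matrix (Fin n) (Fin n) ℝ} (hQ : Qᵀ * Q = 1) :
    ∃ e ∈ admissibleRows c, ∀ i, ((Qᵀ * L i).submatrix (e i) id).det ≠ 0 := by
  have hN (i : ι) : Function.Injective (Qᵀ * L i).mulVec := fun x y hxy => hL i <|
    mulVec_injective_of_transpose_mul_self (F := Qᵀ)
      (by rw [transpose_transpose, mul_eq_one_comm.1 hQ]) (by simpa only [mulVec_mulVec] using hxy)
  choose e e_det e_rank using fun i => exists_det_submatrix_ne_zero_rank_le (hN i)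
  refine ⟨e, fun k => ?_, e_det⟩
  have rank_eq : finrank ℝ (LinearMap.range (leadingCols Q k)ᵀ.mulVecLin) = k.val + 1 := by
    change (leadingCols Q k)ᵀ.rank = _
    have inj := mulVec_injective_of_transpose_mul_self (leadingCols_transpose_mul_self hQ k)
    rw [rank_transpose, Matrix.rank, LinearMap.finrank_range_of_inj (f := mulVecLin _) inj,
      finrank_fintype_fun_eq_card, Fintype.card_coe, Fin.card_Iic]
  have := h.finrank_range_le (leadingCols Q k)ᵀ.mulVecLin
  rw [rank_eq] at this
  push_cast at this
  refine this.trans (Finset.sum_le_sum fun i _ => mul_le_mul_of_nonneg_left ?_ (hc i))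
  rw [← mulVecLin_mul]
  exact_mod_cast e_rank i k

theorem Semistable.exists_pos_le_abs_det_submatrix
    (h : Semistable c fun i => (L i).mulVecLin) (hc : ∀ i, 0 ≤ c i)
    (hL : ∀ i, Function.Injective (L i).mulVec) :
    ∃ κ > 0, ∀ Q : Matrix (Fin n) (Fin n) ℝ, Qᵀ * Q = 1 →
      ∃ e ∈ admissibleRows c, ∀ i, κ ≤ |((Qᵀ * L i).submatrix (e i) id).det| := by
  refine exists_pos_forall_exists_forall_le isCompact_setOf_transpose_mul_self_eq_one
    (fun e i => ?_) fun Q hQ => ?_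
  · exact continuous_abs.comp
      (Continuous.matrix_det (Continuous.matrix_submatrix (by fun_prop) _ _))
  · obtain ⟨e, he, hdet⟩ := h.exists_mem_admissibleRows hc hL hQ
    exact ⟨e, he, fun i => abs_pos.2 (hdet i)⟩

/-- The function of a positive definite matrix `P` whose critical points, for
`P = hᵀ * h`, correspond to the solutions of `∑ i, c i • F i * (F i)ᵀ = 1` in which `F i` is an
orthonormal basis of the range of `h * L i`. -/
noncomputable def energy (c : ι → ℝ) (L : ∀ i, Matrix (Fin n) (m i) ℝ)
    (P : Matrix (Fin n) (Fin n) ℝ) : ℝ :=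
  ∑ i, c i * Real.log ((L i)ᵀ * P * L i).det - Real.log P.det

theorem Semistable.exists_forall_le_energy (h : Semistable c fun i => (L i).mulVecLin)
    (hc : ∀ i, 0 ≤ c i) (hL : ∀ i, Function.Injective (L i).mulVec) :
    ∃ C, ∀ P : Matrix (Fin n) (Fin n) ℝ, P.PosDef → C ≤ energy c L P := by
  obtain ⟨κ, hκ, κ_le⟩ := h.exists_pos_le_abs_det_submatrix hc hL
  refine ⟨∑ i, c i * Real.log (κ ^ 2), fun P hP => ?_⟩
  obtain ⟨Q, p, hQ, hp, rfl⟩ :=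
    exists_eq_conj_diagonal_antitone (isHermitian_iff_isSymm.1 hP.isHermitian)
  have p_pos (r : Fin n) : 0 < p r := by
    have conj_posDef : (Qᵀ * (Q * diagonal p * Qᵀ) * Q).PosDef :=
      posDef_transpose_mul_mul_same hP (mulVec_injective_of_transpose_mul_self hQ)
    rw [mul_assoc, mul_assoc (Q * diagonal p), hQ, mul_one, ← mul_assoc, hQ, one_mul,
      posDef_diagonal_iff] at conj_posDef
    exact conj_posDef r
  obtain ⟨e, he, κ_le⟩ := κ_le Q hQ
  have log_det_P : Real.log (Q * diagonal p * Qᵀ).det = ∑ r, Real.log (p r) := by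
    rw [mul_assoc, det_mul_comm, mul_assoc, hQ, mul_one, det_diagonal,
      Real.log_prod fun r _ => (p_pos r).ne']
  have le_log_det (i : ι) : Real.log (κ ^ 2) + ∑ x, Real.log (p (e i x)) ≤
      Real.log ((L i)ᵀ * (Q * diagonal p * Qᵀ) * L i).det := by
    have assoc : (L i)ᵀ * (Q * diagonal p * Qᵀ) * L i = (Qᵀ * L i)ᵀ * diagonal p * (Qᵀ * L i) := by
      simp only [transpose_mul, transpose_transpose, Matrix.mul_assoc]
    exact assoc ▸ log_sq_add_sum_log_le_log_det hκ (κ_le i) p_pos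
  have hcard : ∑ i, c i * Fintype.card (m i) = n := by
    simpa only [finrank_fintype_fun_eq_card, Fintype.card_fin] using h.sum_finrank_eq
  have log_p_antitone : Antitone fun r => Real.log (p r) := fun r s hrs =>
    Real.log_le_log (p_pos s) (hp hrs)
  calc ∑ i, c i * Real.log (κ ^ 2)
      ≤ ∑ i, c i * Real.log (κ ^ 2) + (∑ i, c i * ∑ x, Real.log (p (e i x)) -
          ∑ r, Real.log (p r)) :=
        le_add_of_nonneg_right (sub_nonneg.2 (sum_le_of_mem_admissibleRows he hcard log_p_antitone))
    _ = ∑ i, c i * (Real.log (κ ^ 2) + ∑ x, Real.log (p (e i x))) - ∑ r, Real.log (p r) := by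
        simp only [mul_add, Finset.sum_add_distrib, add_sub_assoc]
    _ ≤ energy c L (Q * diagonal p * Qᵀ) := by
        rw [energy, log_det_P]
        gcongr with i
        exacts [hc i, le_log_det i]

end LowerBound

section Necessity

variable {n : Type*} [Fintype n] {ι : Type*} [Fintype ι] {m : ι → Type*} [∀ i, Fintype (m i)]

/-- The weighted frame operator of a family of matrices, the `i`-th one being thought of as a basis
of a subspace. -/
def frameOperator (c : ι → ℝ) (F : ∀ i, Matrix n (m i) ℝ) : Matrix n n ℝ :=
  ∑ i, c i • (F i * (F i)ᵀ)

theorem trace_mul_frameOperator (c : ι → ℝ) (F : ∀ i, Matrix n (m i) ℝ) (X : Matrix n n ℝ) :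
    (X * frameOperator c F).trace = ∑ i, c i * ((F i)ᵀ * X * F i).trace := by
  rw [frameOperator, Matrix.mul_sum, trace_sum]
  refine Finset.sum_congr rfl fun i _ => ?_
  rw [Matrix.mul_smul, trace_smul, smul_eq_mul, ← Matrix.mul_assoc, trace_mul_comm,
    ← Matrix.mul_assoc]

theorem exists_isSymm_isProj (S : Submodule ℝ (n → ℝ)) :
    ∃ P : Matrix n n ℝ, P.IsSymm ∧ LinearMap.IsProj S P.mulVecLin := by
  classical
  let S' : Submodule ℝ (EuclideanSpace ℝ n) := S.comap (WithLp.linearEquiv 2 ℝ (n → ℝ)).toLinearMap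
  let P : Matrix n n ℝ := toEuclideanLin.symm S'.starProjection.toLinearMap
  have toEuclideanLin_P : toEuclideanLin P = S'.starProjection.toLinearMap :=
    toEuclideanLin.apply_symm_apply _
  have mulVec_P (x : n → ℝ) : P *ᵥ x = S'.starProjection (WithLp.toLp 2 x) :=
    congrArg (fun f => WithLp.ofLp (f (WithLp.toLp 2 x))) toEuclideanLin_P
  refine ⟨P, isHermitian_iff_isSymm.1 (isSymmetric_toEuclideanLin_iff.1 ?_), fun x => ?_,
    fun x hx => ?_⟩
  · rw [toEuclideanLin_P]
    exact S'.starProjection_isSymmetric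
  · rw [mulVecLin_apply, mulVec_P]
    exact S'.starProjection_apply_mem _
  · rw [mulVecLin_apply, mulVec_P, Submodule.starProjection_eq_self_iff.2 hx]

theorem mul_eq_right_of_isProj {A P : Matrix n n ℝ} {S : Submodule ℝ (n → ℝ)}
    (hPS : LinearMap.IsProj S P.mulVecLin) (hAS : ∀ x ∈ S, A *ᵥ x = x) : A * P = P := by
  classical
  refine toLin'.injective (LinearMap.ext fun x => ?_)
  simpa only [toLin'_apply, mulVec_mulVec, mulVecLin_apply] using hAS _ (hPS.map_mem x)

theorem posSemidef_of_isSymm_of_isProj {P : Matrix n n ℝ} {S : Submodule ℝ (n → ℝ)}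
    (hP : P.IsSymm) (hPS : LinearMap.IsProj S P.mulVecLin) : P.PosSemidef := by
  classical
  have idempotent : Pᵀ * 1 * P = P := by
    rw [hP, mul_one, mul_eq_right_of_isProj hPS hPS.map_id]
  exact idempotent ▸ posSemidef_transpose_mul_mul_same PosSemidef.one P

theorem trace_eq_finrank_of_isProj {P : Matrix n n ℝ} {S : Submodule ℝ (n → ℝ)}
    (hPS : LinearMap.IsProj S P.mulVecLin) : P.trace = finrank ℝ S := by
  classical
  rw [← hPS.trace, ← toLin'_apply', trace_toLin'_eq]

theorem finrank_le_trace_of_posSemidef {A : Matrix n n ℝ} (hA : A.PosSemidef)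
    {S : Submodule ℝ (n → ℝ)} (hAS : ∀ x ∈ S, A *ᵥ x = x) : finrank ℝ S ≤ A.trace := by
  classical
  obtain ⟨P, hP, hPS⟩ := exists_isSymm_isProj S
  have hAP : A * P = P := mul_eq_right_of_isProj hPS hAS
  have hPP : P * P = P := mul_eq_right_of_isProj hPS hPS.map_id
  have hPA : P * A = P := by
    simpa only [transpose_mul, hP.eq, (isHermitian_iff_isSymm.1 hA.isHermitian).eq] using
      congrArg transpose hAP
  have compression : (1 - P)ᵀ * A * (1 - P) = A - P := by
    rw [transpose_sub, transpose_one, hP, sub_mul, one_mul, hPA, mul_sub, mul_one, sub_mul, hAP,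
      hPP, sub_self, sub_zero]
  have trace_nonneg := (posSemidef_transpose_mul_mul_same hA (1 - P)).trace_nonneg
  rwa [compression, trace_sub, trace_eq_finrank_of_isProj hPS, sub_nonneg] at trace_nonneg

variable [∀ i, DecidableEq (m i)]

theorem trace_frameOperator (c : ι → ℝ) {F : ∀ i, Matrix n (m i) ℝ} (hF : ∀ i, (F i)ᵀ * F i = 1) :
    (frameOperator c F).trace = ∑ i, c i * Fintype.card (m i) := by
  classical
  simpa only [one_mul, Matrix.mul_one, hF, trace_one] using trace_mul_frameOperator c F 1

theorem semistable_of_frameOperator_eq_one [DecidableEq n] {c : ι → ℝ} (hc : ∀ i, 0 ≤ c i)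
    {F : ∀ i, Matrix n (m i) ℝ} (hF : ∀ i, (F i)ᵀ * F i = 1) (h : frameOperator c F = 1) :
    Semistable c fun i => (F i).mulVecLin where
  sum_finrank_comap_le S := by
    obtain ⟨P, hP, hPS⟩ := exists_isSymm_isProj S
    calc ∑ i, c i * (finrank ℝ (S.comap (F i).mulVecLin) : ℝ)
        ≤ ∑ i, c i * ((F i)ᵀ * P * F i).trace := by
          gcongr with i
          · exact hc i
          refine finrank_le_trace_of_posSemidef (posSemidef_transpose_mul_mul_same
            (posSemidef_of_isSymm_of_isProj hP hPS) (F i)) fun x hx => ?_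
          have hPx : P *ᵥ (F i *ᵥ x) = F i *ᵥ x := hPS.map_id _ hx
          rw [← mulVec_mulVec, ← mulVec_mulVec, hPx, mulVec_mulVec, hF, one_mulVec]
      _ = finrank ℝ S := by
          rw [← trace_mul_frameOperator, h, mul_one, trace_eq_finrank_of_isProj hPS]
  sum_finrank_eq := by
    simpa only [h, trace_one, finrank_fintype_fun_eq_card] using (trace_frameOperator c hF).symm

end Necessity

section Descent

theorem log_det_transpose_mul_mul {m : Type*} [Fintype m] [DecidableEq m] {T Y : Matrix m m ℝ}
    (hT : T.det ≠ 0) (hY : Y.det ≠ 0) :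
    Real.log (Tᵀ * Y * T).det = Real.log (Tᵀ * T).det + Real.log Y.det := by
  simp only [det_mul, det_transpose]
  rw [mul_right_comm, Real.log_mul (mul_ne_zero hT hT) hY]

variable {n : ℕ} {ι : Type*} [Fintype ι] {m : ι → Type*} [∀ i, Fintype (m i)] {c : ι → ℝ}
  {F : ∀ i, Matrix (Fin n) (m i) ℝ}

/-- The average of the identity and the frame operator, which, unlike the latter, is always
positive definite. -/
noncomputable def averagedFrameOperator (c : ι → ℝ) (F : ∀ i, Matrix (Fin n) (m i) ℝ) :
    Matrix (Fin n) (Fin n) ℝ :=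
  (1 / 2 : ℝ) • (1 + frameOperator c F)

theorem frameOperator_eq_two_smul_sub_one (c : ι → ℝ) (F : ∀ i, Matrix (Fin n) (m i) ℝ) :
    frameOperator c F = (2 : ℝ) • averagedFrameOperator c F - 1 := by
  rw [averagedFrameOperator, smul_smul]
  norm_num

theorem posDef_averagedFrameOperator (hc : ∀ i, 0 ≤ c i) (F : ∀ i, Matrix (Fin n) (m i) ℝ) :
    (averagedFrameOperator c F).PosDef := by
  have frameOperator_posSemidef : (frameOperator c F).PosSemidef :=
    posSemidef_sum _ fun i _ => PosSemidef.smul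
      (by simpa only [conjTranspose_eq_transpose_of_trivial] using
        posSemidef_self_mul_conjTranspose (F i)) (hc i)
  exact (PosDef.one.add_posSemidef frameOperator_posSemidef).smul one_half_pos

variable [∀ i, DecidableEq (m i)]

theorem trace_averagedFrameOperator (hF : ∀ i, (F i)ᵀ * F i = 1)
    (hcard : ∑ i, c i * Fintype.card (m i) = n) : (averagedFrameOperator c F).trace = n := by
  rw [averagedFrameOperator, trace_smul, trace_add, trace_one, trace_frameOperator c hF, hcard,
    Fintype.card_fin, smul_eq_mul]
  ring

theorem energy_le_trace_mul_frameOperator (hc : ∀ i, 0 ≤ c i) (hF : ∀ i, (F i)ᵀ * F i = 1)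
    (hcard : ∑ i, c i * Fintype.card (m i) = n) {X : Matrix (Fin n) (Fin n) ℝ} (hX : X.PosDef) :
    energy c F X ≤ (X * frameOperator c F).trace - n - Real.log X.det := by
  rw [energy, trace_mul_frameOperator, ← hcard, ← Finset.sum_sub_distrib]
  simp only [← mul_sub]
  gcongr with i
  · exact hc i
  · exact log_det_le_trace_sub_card
      (posDef_transpose_mul_mul_same hX (mulVec_injective_of_transpose_mul_self (hF i)))

theorem energy_inv_averagedFrameOperator_le (hc : ∀ i, 0 ≤ c i) (hF : ∀ i, (F i)ᵀ * F i = 1)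
    (hcard : ∑ i, c i * Fintype.card (m i) = n) :
    energy c F (averagedFrameOperator c F)⁻¹ ≤ 2 * Real.log (averagedFrameOperator c F).det := by
  set M := averagedFrameOperator c F with hM
  have M_posDef : M.PosDef := posDef_averagedFrameOperator hc F
  have trace_eq : (M⁻¹ * frameOperator c F).trace = 2 * n - M⁻¹.trace := by
    rw [frameOperator_eq_two_smul_sub_one, ← hM, mul_sub, mul_one, Matrix.mul_smul,
      nonsing_inv_mul M ((isUnit_iff_isUnit_det M).1 M_posDef.isUnit), trace_sub, trace_smul,
      trace_one, Fintype.card_fin, smul_eq_mul]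
  have log_det_inv : Real.log M⁻¹.det = -Real.log M.det := by
    rw [det_nonsing_inv, Ring.inverse_eq_inv', Real.log_inv]
  have energy_le := energy_le_trace_mul_frameOperator hc hF hcard M_posDef.inv
  have log_det_le := log_det_le_trace_sub_card M_posDef.inv
  rw [Fintype.card_fin] at log_det_le
  linarith

variable {L : ∀ i, Matrix (Fin n) (m i) ℝ}

theorem energy_transpose_mul_mul (hL : ∀ i, Function.Injective (L i).mulVec)
    {h : Matrix (Fin n) (Fin n) ℝ} (hh : IsUnit h) (hF : ∀ i, (F i)ᵀ * F i = 1)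
    {T : ∀ i, Matrix (m i) (m i) ℝ} (hFT : ∀ i, h * L i = F i * T i)
    {X : Matrix (Fin n) (Fin n) ℝ} (hX : X.PosDef) :
    energy c L (hᵀ * X * h) = energy c L (hᵀ * h) + energy c F X := by
  have compress (i : ι) (Y : Matrix (Fin n) (Fin n) ℝ) :
      (L i)ᵀ * (hᵀ * Y * h) * L i = (T i)ᵀ * ((F i)ᵀ * Y * F i) * T i := by
    calc (L i)ᵀ * (hᵀ * Y * h) * L i = (h * L i)ᵀ * Y * (h * L i) := by
          simp only [transpose_mul, Matrix.mul_assoc]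
      _ = (T i)ᵀ * ((F i)ᵀ * Y * F i) * T i := by
          rw [hFT]
          simp only [transpose_mul, Matrix.mul_assoc]
  have compress_one (i : ι) : (L i)ᵀ * (hᵀ * h) * L i = (T i)ᵀ * T i := by
    simpa only [mul_one, Matrix.mul_one, hF] using compress i 1
  have hh_posDef : (hᵀ * h).PosDef := by
    simpa only [mul_one] using posDef_transpose_mul_mul_same PosDef.one
      (mulVec_injective_of_isUnit hh)
  have det_T_ne_zero (i : ι) : (T i).det ≠ 0 := fun h0 =>
    (posDef_transpose_mul_mul_same hh_posDef (hL i)).det_pos.ne' (by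
      rw [compress_one, det_mul, h0, mul_zero])
  have det_F_ne_zero (i : ι) : ((F i)ᵀ * X * F i).det ≠ 0 :=
    (posDef_transpose_mul_mul_same hX (mulVec_injective_of_transpose_mul_self (hF i))).det_pos.ne'
  simp only [energy, compress, compress_one, log_det_transpose_mul_mul (det_T_ne_zero _)
    (det_F_ne_zero _), log_det_transpose_mul_mul ((isUnit_iff_isUnit_det h).1 hh).ne_zero
    hX.det_pos.ne', mul_add, Finset.sum_add_distrib]
  ring

theorem Semistable.exists_forall_lt_log_det_averagedFrameOperator
    (hcL : Semistable c fun i => (L i).mulVecLin) (hc : ∀ i, 0 ≤ c i)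
    (hL : ∀ i, Function.Injective (L i).mulVec) {ε : ℝ} (hε : 0 < ε) :
    ∃ h : Matrix (Fin n) (Fin n) ℝ, IsUnit h ∧
      ∀ (F : ∀ i, Matrix (Fin n) (m i) ℝ) (T : ∀ i, Matrix (m i) (m i) ℝ),
        (∀ i, (F i)ᵀ * F i = 1) → (∀ i, h * L i = F i * T i) →
        -ε < Real.log (averagedFrameOperator c F).det := by
  obtain ⟨C, C_le⟩ := hcL.exists_forall_le_energy hc hL
  have hcard : ∑ i, c i * Fintype.card (m i) = n := by
    simpa only [finrank_fintype_fun_eq_card, Fintype.card_fin] using hcL.sum_finrank_eq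
  let energies : Set ℝ := energy c L '' {P | P.PosDef}
  have bddBelow : BddBelow energies := ⟨C, Set.forall_mem_image.2 C_le⟩
  obtain ⟨_, ⟨P, hP, rfl⟩, almost_minimal⟩ :=
    Real.lt_sInf_add_pos (s := energies) ⟨_, 1, PosDef.one, rfl⟩ hε
  obtain ⟨h, hh, rfl⟩ := exists_isUnit_eq_transpose_mul_self hP
  refine ⟨h, hh, fun F T hF hFT => ?_⟩
  have inv_posDef := (posDef_averagedFrameOperator hc F).inv
  have sInf_le := csInf_le bddBelow (Set.mem_image_of_mem _
    (posDef_transpose_mul_mul_same inv_posDef (mulVec_injective_of_isUnit hh)))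
  rw [energy_transpose_mul_mul hL hh hF hFT inv_posDef] at sInf_le
  linarith [energy_inv_averagedFrameOperator_le hc hF hcard]

end Descent

section SumsEqualToOne

variable {n : ℕ} {J : Type*}

/-- The weights attached to the steps of a family of complete flags when the `j`-th flag carries
the spectrum `a j`. -/
def flagWeight (a : J → Fin n → ℝ) (x : J × Fin n) : ℝ :=
  gap (a x.1) x.2

/-- The steps of the complete flags spanned by the columns of the matrices `g j`. -/
def flagStep (g : J → Matrix (Fin n) (Fin n) ℝ) (x : J × Fin n) :
    Matrix (Fin n) (Finset.Iic x.2) ℝ :=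
  leadingCols (g x.1) x.2

theorem flagWeight_nonneg {a : J → Fin n → ℝ} (ha : ∀ j, Antitone (a j)) (ha0 : 0 ≤ a)
    (x : J × Fin n) : 0 ≤ flagWeight a x :=
  gap_nonneg (ha x.1) (ha0 x.1) x.2

theorem flagWeight_add_smul (x y : ℝ) (a a' : J → Fin n → ℝ) :
    flagWeight (x • a + y • a') = x • flagWeight a + y • flagWeight a' := by
  funext i
  simp only [flagWeight, Pi.add_apply, Pi.smul_apply, gap_add, gap_smul]

theorem flagStep_transpose_mul_self {Q : J → Matrix (Fin n) (Fin n) ℝ}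
    (hQ : ∀ j, (Q j)ᵀ * Q j = 1) (x : J × Fin n) : (flagStep Q x)ᵀ * flagStep Q x = 1 :=
  leadingCols_transpose_mul_self (hQ x.1) x.2

theorem mulVec_flagStep_injective {g : J → Matrix (Fin n) (Fin n) ℝ} (hg : ∀ j, IsUnit (g j))
    (x : J × Fin n) : Function.Injective (flagStep g x).mulVec :=
  mulVec_leadingCols_injective (hg x.1) x.2

variable [Fintype J]

theorem frameOperator_flagStep (a : J → Fin n → ℝ) (Q : J → Matrix (Fin n) (Fin n) ℝ) :
    frameOperator (flagWeight a) (flagStep Q) = ∑ j, Q j * diagonal (a j) * (Q j)ᵀ := by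
  simp only [mul_diagonal_mul_transpose_eq_sum_gap_smul]
  exact Fintype.sum_prod_type _

/-- Semistability of the flags spanned by the columns of the matrices `g j`, weighted by the
sequences `a j`. -/
def SemistableFlags (a : J → Fin n → ℝ) (g : J → Matrix (Fin n) (Fin n) ℝ) : Prop :=
  Semistable (flagWeight a) fun x => (flagStep g x).mulVecLin

theorem semistableFlags_of_sum_eq_one {a : J → Fin n → ℝ} (ha : ∀ j, Antitone (a j))
    (ha0 : 0 ≤ a) {Q : J → Matrix (Fin n) (Fin n) ℝ} (hQ : ∀ j, (Q j)ᵀ * Q j = 1)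
    (h : ∑ j, Q j * diagonal (a j) * (Q j)ᵀ = 1) : SemistableFlags a Q :=
  semistable_of_frameOperator_eq_one (flagWeight_nonneg ha ha0) (flagStep_transpose_mul_self hQ)
    ((frameOperator_flagStep a Q).trans h)

variable {a : J → Fin n → ℝ} {g : J → Matrix (Fin n) (Fin n) ℝ}

theorem SemistableFlags.exists_lt_log_det (h : SemistableFlags a g) (ha : ∀ j, Antitone (a j))
    (ha0 : 0 ≤ a) (hg : ∀ j, IsUnit (g j)) {ε : ℝ} (hε : 0 < ε) :
    ∃ Q : J → Matrix (Fin n) (Fin n) ℝ, (∀ j, (Q j)ᵀ * Q j = 1) ∧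
      -ε < Real.log (averagedFrameOperator (flagWeight a) (flagStep Q)).det := by
  obtain ⟨h, -, lt_log_det⟩ := Semistable.exists_forall_lt_log_det_averagedFrameOperator h
    (flagWeight_nonneg ha ha0) (mulVec_flagStep_injective hg) hε
  choose Q R hQ hR hQR using fun j => exists_eq_mul_blockTriangular (h * g j)
  refine ⟨Q, hQ, lt_log_det _ (fun x => (R x.1).submatrix Subtype.val Subtype.val)
    (flagStep_transpose_mul_self hQ) fun x => ?_⟩
  exact (congrArg (leadingCols · x.2) (hQR x.1)).trans
    (leadingCols_mul_of_blockTriangular _ (hR x.1) x.2)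

theorem continuous_det_averagedFrameOperator_flagStep (a : J → Fin n → ℝ) :
    Continuous fun Q : J → Matrix (Fin n) (Fin n) ℝ =>
      (averagedFrameOperator (flagWeight a) (flagStep Q)).det := by
  simp only [averagedFrameOperator, frameOperator_flagStep]
  fun_prop

theorem SemistableFlags.exists_sum_eq_one (h : SemistableFlags a g) (ha : ∀ j, Antitone (a j))
    (ha0 : 0 ≤ a) (hg : ∀ j, IsUnit (g j)) :
    ∃ Q : J → Matrix (Fin n) (Fin n) ℝ, (∀ j, (Q j)ᵀ * Q j = 1) ∧
      ∑ j, Q j * diagonal (a j) * (Q j)ᵀ = 1 := by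
  let M (Q : J → Matrix (Fin n) (Fin n) ℝ) := averagedFrameOperator (flagWeight a) (flagStep Q)
  have M_posDef (Q : J → Matrix (Fin n) (Fin n) ℝ) : (M Q).PosDef :=
    posDef_averagedFrameOperator (flagWeight_nonneg ha ha0) _
  have compact : IsCompact (Set.univ.pi fun _ : J => {Q : Matrix (Fin n) (Fin n) ℝ | Qᵀ * Q = 1}) :=
    isCompact_univ_pi fun _ => isCompact_setOf_transpose_mul_self_eq_one
  obtain ⟨Q, hQ, maximal⟩ := compact.exists_isMaxOn ⟨1, fun j _ => by simp⟩
    (continuous_det_averagedFrameOperator_flagStep a).continuousOn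
  replace hQ (j : J) : (Q j)ᵀ * Q j = 1 := hQ j trivial
  have log_det_nonneg : 0 ≤ Real.log (M Q).det := by
    refine le_of_forall_sub_le fun ε hε => ?_
    obtain ⟨Q', hQ', lt_log_det⟩ := h.exists_lt_log_det ha ha0 hg hε
    rw [zero_sub]
    exact lt_log_det.le.trans (Real.log_le_log (M_posDef Q').det_pos (maximal fun j _ => hQ' j))
  have trace_M : (M Q).trace = n := by
    refine trace_averagedFrameOperator (flagStep_transpose_mul_self hQ) ?_
    simpa only [finrank_fintype_fun_eq_card, Fintype.card_fin] using Semistable.sum_finrank_eq h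
  have M_eq_one : M Q = 1 := eq_one_of_trace_sub_card_le_log_det (M_posDef Q) <| by
    rwa [trace_M, Fintype.card_fin, sub_self]
  refine ⟨Q, hQ, ?_⟩
  calc ∑ j, Q j * diagonal (a j) * (Q j)ᵀ = (2 : ℝ) • M Q - 1 := by
        rw [← frameOperator_flagStep, frameOperator_eq_two_smul_sub_one]
    _ = 1 := by rw [M_eq_one, two_smul, add_sub_cancel_right]

end SumsEqualToOne

section ConvexCombinations

theorem finite_setOf_not_isUnit_pencil {K n : Type*} [Field K] [Fintype n] [DecidableEq n]
    {g : Matrix n n K} (hg : IsUnit g) (d : Matrix n n K) :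
    {s : K | ¬ IsUnit (g + s • d)}.Finite := by
  let p : Polynomial K :=
    ((Polynomial.X : Polynomial K) • d.map Polynomial.C + g.map Polynomial.C).det
  have eval_p (s : K) : p.eval s = (g + s • d).det := by
    rw [← Polynomial.coe_evalRingHom, RingHom.map_det, add_comm g]
    congr 1
    ext x y
    simp [mul_comm s]
  have p_ne_zero : p ≠ 0 := fun hp => ((isUnit_iff_isUnit_det g).1 hg).ne_zero <| by
    simpa only [hp, Polynomial.eval_zero, zero_smul, add_zero] using (eval_p 0).symm
  refine (Polynomial.finite_setOfPred_isRoot p_ne_zero).subset fun s hs => ?_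
  by_contra hroot
  exact hs ((isUnit_iff_isUnit_det _).2 (isUnit_iff_ne_zero.2 fun h0 =>
    hroot ((eval_p s).trans h0)))

variable {n : ℕ} {J : Type*} [Fintype J] {a a' : J → Fin n → ℝ}
  {g g' : J → Matrix (Fin n) (Fin n) ℝ}

theorem SemistableFlags.finite_setOf_not_pencil (h : SemistableFlags a g)
    (ha : ∀ j, Antitone (a j)) (ha0 : 0 ≤ a) (d : J → Matrix (Fin n) (Fin n) ℝ) :
    {s : ℝ | ¬ SemistableFlags a (g + s • d)}.Finite := by
  have mulVecLin_pencil (s : ℝ) (x : J × Fin n) : (flagStep (g + s • d) x).mulVecLin =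
      (flagStep g x).mulVecLin + s • (flagStep d x).mulVecLin :=
    LinearMap.ext fun y =>
      (add_mulVec _ _ y).trans (congrArg (flagStep g x *ᵥ y + ·) (smul_mulVec s _ y))
  simp only [SemistableFlags, mulVecLin_pencil]
  exact Semistable.finite_setOf_not_pencil (flagWeight_nonneg ha ha0) h _

/-- Both tuples lie on the line `s ↦ g + s • (g' - g)`, on which each of the required conditions
fails at finitely many points only. -/
theorem SemistableFlags.exists_semistableFlags_and (h : SemistableFlags a g)
    (ha : ∀ j, Antitone (a j)) (ha0 : 0 ≤ a) (hg : ∀ j, IsUnit (g j)) (h' : SemistableFlags a' g')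
    (ha' : ∀ j, Antitone (a' j)) (ha0' : 0 ≤ a') :
    ∃ u : J → Matrix (Fin n) (Fin n) ℝ, (∀ j, IsUnit (u j)) ∧ SemistableFlags a u ∧
      SemistableFlags a' u := by
  have finite := h.finite_setOf_not_pencil ha ha0 (g' - g)
  have finite' := (h'.finite_setOf_not_pencil ha' ha0' (g - g')).preimage
    (f := fun s : ℝ => 1 - s) sub_right_injective.injOn
  have finite_not_isUnit : (⋃ j, {s : ℝ | ¬ IsUnit (g j + s • (g' j - g j))}).Finite :=
    Set.finite_iUnion fun j => finite_setOf_not_isUnit_pencil (hg j) _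
  obtain ⟨s, hs⟩ := ((finite.union finite').union finite_not_isUnit).exists_notMem
  simp only [Set.mem_union, not_or, Set.mem_iUnion, not_exists, Set.mem_preimage,
    Set.mem_ofPred_eq, not_not] at hs
  obtain ⟨⟨semistable, semistable'⟩, isUnit⟩ := hs
  have line_symm : g' + (1 - s) • (g - g') = g + s • (g' - g) := by module
  exact ⟨g + s • (g' - g), isUnit, semistable, line_symm ▸ semistable'⟩

theorem convex_setOf_sum_conj_diagonal_eq_one : Convex ℝ {a : J → Fin n → ℝ |
    (∀ j, Antitone (a j)) ∧ 0 ≤ a ∧ ∃ Q : J → Matrix (Fin n) (Fin n) ℝ, (∀ j, (Q j)ᵀ * Q j = 1) ∧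
      ∑ j, Q j * diagonal (a j) * (Q j)ᵀ = 1} := by
  rintro a ⟨ha, ha0, Q, hQ, h⟩ a' ⟨ha', ha0', Q', hQ', h'⟩ x y hx hy hxy
  have Q_isUnit (j : J) : IsUnit (Q j) := isUnit_of_mul_isUnit_right ((hQ j).symm ▸ isUnit_one)
  obtain ⟨u, hu, semistable, semistable'⟩ :=
    (semistableFlags_of_sum_eq_one ha ha0 hQ h).exists_semistableFlags_and ha ha0 Q_isUnit
      (semistableFlags_of_sum_eq_one ha' ha0' hQ' h') ha' ha0'
  have combo_antitone (j : J) : Antitone ((x • a + y • a') j) :=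
    ((ha j).const_mul hx).add ((ha' j).const_mul hy)
  have combo_nonneg : 0 ≤ x • a + y • a' := add_nonneg (smul_nonneg hx ha0) (smul_nonneg hy ha0')
  have combo_semistable : SemistableFlags (x • a + y • a') u := by
    rw [SemistableFlags, flagWeight_add_smul]
    exact convex_setOf_semistable _ semistable semistable' hx hy hxy
  exact ⟨combo_antitone, combo_nonneg,
    combo_semistable.exists_sum_eq_one combo_antitone combo_nonneg hu⟩

theorem conj_diagonal_add_const {m : Type*} [Fintype m] [DecidableEq m] {Q : Matrix m m ℝ}
    (hQ : Qᵀ * Q = 1) (d : m → ℝ) (τ : ℝ) :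
    Q * diagonal (d + fun _ => τ) * Qᵀ = Q * diagonal d * Qᵀ + τ • 1 := by
  have diagonal_eq : diagonal (d + fun _ => τ) = diagonal d + τ • (1 : Matrix m m ℝ) := by
    rw [smul_one_eq_diagonal, diagonal_add]
    rfl
  rw [diagonal_eq, mul_add, add_mul, Matrix.mul_smul, mul_one, Matrix.smul_mul,
    mul_eq_one_comm.1 hQ]

theorem sum_conj_diagonal_smul_add_const_eq_one_iff [Nonempty J]
    {Q : J → Matrix (Fin n) (Fin n) ℝ} (hQ : ∀ j, (Q j)ᵀ * Q j = 1) (a : J → Fin n → ℝ) {τ : ℝ}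
    (hτ : τ ≠ 0) :
    ∑ j, Q j * diagonal ((τ * Fintype.card J)⁻¹ • (a j + fun _ => τ)) * (Q j)ᵀ = 1 ↔
      ∑ j, Q j * diagonal (a j) * (Q j)ᵀ = 0 := by
  have card_mul_ne_zero : τ * Fintype.card J ≠ 0 :=
    mul_ne_zero hτ (Nat.cast_ne_zero.2 Fintype.card_ne_zero)
  simp only [diagonal_smul, Matrix.mul_smul, Matrix.smul_mul,
    conj_diagonal_add_const (hQ _), ← Finset.smul_sum, Finset.sum_add_distrib, Finset.sum_const,
    Finset.card_univ, ← Nat.cast_smul_eq_nsmul ℝ, smul_smul]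
  rw [inv_smul_eq_iff₀ card_mul_ne_zero, add_eq_right]

theorem convex_setOf_sum_conj_diagonal_eq_zero [Nonempty J] : Convex ℝ {a : J → Fin n → ℝ |
    (∀ j, Antitone (a j)) ∧ ∃ Q : J → Matrix (Fin n) (Fin n) ℝ, (∀ j, (Q j)ᵀ * Q j = 1) ∧
      ∑ j, Q j * diagonal (a j) * (Q j)ᵀ = 0} := by
  rintro a ⟨ha, Q, hQ, h⟩ a' ⟨ha', Q', hQ', h'⟩ x y hx hy hxy
  obtain ⟨τ, τ_pos, norm_le, norm_le'⟩ : ∃ τ > 0, ‖a‖ ≤ τ ∧ ‖a'‖ ≤ τ :=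
    ⟨‖a‖ + ‖a'‖ + 1, by positivity, by linarith [norm_nonneg a'], by linarith [norm_nonneg a]⟩
  let ρ := (τ * Fintype.card J)⁻¹
  have ρ_nonneg : 0 ≤ ρ := by positivity
  let φ (b : J → Fin n → ℝ) : J → Fin n → ℝ := ρ • (b + fun _ _ => τ)
  have φ_antitone {b : J → Fin n → ℝ} (hb : ∀ j, Antitone (b j)) (j : J) : Antitone (φ b j) :=
    ((hb j).add_const τ).const_mul ρ_nonneg
  have φ_nonneg {b : J → Fin n → ℝ} (hb : ‖b‖ ≤ τ) : 0 ≤ φ b := smul_nonneg ρ_nonneg fun j r =>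
    neg_le_iff_add_nonneg.1 <|
      (abs_le.1 ((norm_le_pi_norm (b j) r).trans ((norm_le_pi_norm b j).trans hb))).1
  have φ_combo : x • φ a + y • φ a' = φ (x • a + y • a') := by
    obtain rfl : y = 1 - x := eq_sub_of_add_eq' hxy
    simp only [φ]
    module
  obtain ⟨-, -, U, hU, sum_U⟩ := convex_setOf_sum_conj_diagonal_eq_one
    ⟨φ_antitone ha, φ_nonneg norm_le, Q, hQ,
      (sum_conj_diagonal_smul_add_const_eq_one_iff hQ a τ_pos.ne').2 h⟩
    ⟨φ_antitone ha', φ_nonneg norm_le', Q', hQ',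
      (sum_conj_diagonal_smul_add_const_eq_one_iff hQ' a' τ_pos.ne').2 h'⟩ hx hy hxy
  rw [φ_combo] at sum_U
  exact ⟨fun j => ((ha j).const_mul hx).add ((ha' j).const_mul hy), U, hU,
    (sum_conj_diagonal_smul_add_const_eq_one_iff hU _ τ_pos.ne').1 sum_U⟩

end ConvexCombinations

section HornTriples

variable {n : ℕ}

/-- The spectra, in weakly decreasing order, of `A`, `B` and `-(A + B)` when `A`, `B` and `A + B`
have spectra `lam`, `mu` and `nu`. The reversal restores the order destroyed by the sign. -/
def hornTriple (lam mu nu : Fin n → ℝ) : Fin 3 → Fin n → ℝ :=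
  ![lam, mu, -(nu ∘ Fin.rev)]

theorem antitone_hornTriple {lam mu nu : Fin n → ℝ} (hlam : Antitone lam) (hmu : Antitone mu)
    (hnu : Antitone nu) (j : Fin 3) : Antitone (hornTriple lam mu nu j) := by
  fin_cases j
  exacts [hlam, hmu, fun r s hrs => neg_le_neg (hnu (Fin.rev_le_rev.2 hrs))]

theorem hornTriple_add_smul (lam mu nu nu' : Fin n → ℝ) {x y : ℝ} (hxy : x + y = 1) :
    hornTriple lam mu (x • nu + y • nu') =
      x • hornTriple lam mu nu + y • hornTriple lam mu nu' := by
  funext j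
  fin_cases j
  · exact (Convex.combo_self hxy lam).symm
  · exact (Convex.combo_self hxy mu).symm
  · funext r
    change -(x * nu r.rev + y * nu' r.rev) = x * -nu r.rev + y * -nu' r.rev
    ring

theorem sum_conj_diagonal_hornTriple_eq_zero_iff {lam mu nu : Fin n → ℝ}
    (Q : Fin 3 → Matrix (Fin n) (Fin n) ℝ) :
    ∑ j, Q j * diagonal (hornTriple lam mu nu j) * (Q j)ᵀ = 0 ↔
      Q 0 * diagonal lam * (Q 0)ᵀ + Q 1 * diagonal mu * (Q 1)ᵀ =
        Q 2 * diagonal (nu ∘ Fin.rev) * (Q 2)ᵀ := by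
  have third : Q 2 * diagonal (hornTriple lam mu nu 2) * (Q 2)ᵀ =
      -(Q 2 * diagonal (nu ∘ Fin.rev) * (Q 2)ᵀ) := by
    rw [← neg_mul, ← mul_neg, diagonal_neg]
    rfl
  rw [Fin.sum_univ_three, third, add_neg_eq_zero]
  rfl

theorem isSymm_and_charpoly_eq_iff_rev {M : Matrix (Fin n) (Fin n) ℝ} {nu : Fin n → ℝ} :
    (M.IsSymm ∧ M.charpoly = ∏ i, (Polynomial.X - Polynomial.C (nu i))) ↔
      ∃ Q : Matrix (Fin n) (Fin n) ℝ, Qᵀ * Q = 1 ∧ M = Q * diagonal (nu ∘ Fin.rev) * Qᵀ := by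
  rw [← isSymm_and_charpoly_eq_iff,
    ← Equiv.prod_comp Fin.revPerm fun i => Polynomial.X - Polynomial.C (nu i)]
  rfl

theorem exists_isSymm_charpoly_eq_iff {lam mu nu : Fin n → ℝ} :
    (∃ A B : Matrix (Fin n) (Fin n) ℝ, A.IsSymm ∧ B.IsSymm ∧
      A.charpoly = ∏ i, (Polynomial.X - Polynomial.C (lam i)) ∧
      B.charpoly = ∏ i, (Polynomial.X - Polynomial.C (mu i)) ∧
      (A + B).charpoly = ∏ i, (Polynomial.X - Polynomial.C (nu i))) ↔
    ∃ Q : Fin 3 → Matrix (Fin n) (Fin n) ℝ, (∀ j, (Q j)ᵀ * Q j = 1) ∧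
      ∑ j, Q j * diagonal (hornTriple lam mu nu j) * (Q j)ᵀ = 0 := by
  simp only [sum_conj_diagonal_hornTriple_eq_zero_iff]
  constructor
  · rintro ⟨A, B, hA, hB, hAlam, hBmu, hABnu⟩
    obtain ⟨Q₀, hQ₀, rfl⟩ := isSymm_and_charpoly_eq_iff.1 ⟨hA, hAlam⟩
    obtain ⟨Q₁, hQ₁, rfl⟩ := isSymm_and_charpoly_eq_iff.1 ⟨hB, hBmu⟩
    obtain ⟨Q₂, hQ₂, sum_eq⟩ := isSymm_and_charpoly_eq_iff_rev.1 ⟨hA.add hB, hABnu⟩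
    refine ⟨![Q₀, Q₁, Q₂], fun j => ?_, sum_eq⟩
    fin_cases j
    exacts [hQ₀, hQ₁, hQ₂]
  · rintro ⟨Q, hQ, sum_eq⟩
    obtain ⟨hA, hAlam⟩ := isSymm_and_charpoly_eq_iff.2 ⟨Q 0, hQ 0, rfl⟩
    obtain ⟨hB, hBmu⟩ := isSymm_and_charpoly_eq_iff.2 ⟨Q 1, hQ 1, rfl⟩
    exact ⟨_, _, hA, hB, hAlam, hBmu, (isSymm_and_charpoly_eq_iff_rev.2 ⟨Q 2, hQ 2, sum_eq⟩).2⟩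

end HornTriples

end HornConvex

/-- For weakly decreasing `λ, μ ∈ ℝⁿ`, the set of weakly decreasing
`ν ∈ ℝⁿ` arising as the spectrum of `A + B` for real symmetric matrices `A, B` with
`spec A = λ` and `spec B = μ` is convex.  (Here `spec A = λ` is expressed by the
characteristic polynomial being `∏ (X − λᵢ)`.) -/
theorem stmt10 (n : ℕ) (hn : 1 ≤ n) (lam mu : Fin n → ℝ)
    (hlam : Antitone lam) (hmu : Antitone mu) :
    Convex ℝ {nu : Fin n → ℝ | Antitone nu ∧
      ∃ A B : Matrix (Fin n) (Fin n) ℝ, A.IsSymm ∧ B.IsSymm ∧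
        A.charpoly = ∏ i : Fin n, (Polynomial.X - Polynomial.C (lam i)) ∧
        B.charpoly = ∏ i : Fin n, (Polynomial.X - Polynomial.C (mu i)) ∧
        (A + B).charpoly = ∏ i : Fin n, (Polynomial.X - Polynomial.C (nu i))} := by
  open HornConvex in
  simp only [exists_isSymm_charpoly_eq_iff]
  rintro nu ⟨hnu, hQ⟩ nu' ⟨hnu', hQ'⟩ x y hx hy hxy
  obtain ⟨-, hU⟩ := convex_setOf_sum_conj_diagonal_eq_zero
    ⟨antitone_hornTriple hlam hmu hnu, hQ⟩ ⟨antitone_hornTriple hlam hmu hnu', hQ'⟩ hx hy hxy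
  rw [← hornTriple_add_smul lam mu nu nu' hxy] at hU
  exact ⟨(hnu.const_mul hx).add (hnu'.const_mul hy), hU⟩
end

section
/- Let n ≥ 1 and let λ ∈ ℝⁿ be a weakly decreasing n-tuple. Then { (B₁₁, B₂₂, …, B_nn) ∈ ℝⁿ : B is a real symmetric n×n matrix with spec(B) = λ } is equal to the convex hull in ℝⁿ of the set { (λ_{π(1)}, …, λ_{π(n)}) : π a permutation of {1, …, n} }. -/
/-!
Schur: if `B = U diag(μ) Uᴴ` with `U` unitary, the diagonal of `B` is `M μ` for the doubly
stochastic matrix `M i j = ‖U i j‖²`, so by Birkhoff's theorem it is a convex combination of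
rearrangements of `μ`.

Horn: a transfer moves an amount `δ` from an entry `a` of a vector to an entry `b ≤ a`, where
`0 ≤ δ ≤ a - b`. Every point of the permutohedron of `λ` is reached from `λ` by finitely many
transfers (Hardy, Littlewood and Pólya), and diagonals of matrices with spectrum `λ` are closed
under transfers: rotating the coordinate plane `(i, j)` by an angle from `0` to `π / 2` moves the
entry `B i i` continuously to `B j j` and fixes the diagonal outside this plane.
-/

open Finset Function Matrix
open Relation (ReflTransGen)

section Transfer

variable {ι κ R : Type*} [DecidableEq ι] [DecidableEq κ]
  [AddCommGroup R] [LinearOrder R]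

/-- A Robin Hood transfer (or T-transform): `e'` arises from `e` by moving an amount `δ` from a
larger entry `e i` to a smaller entry `e j`. The amount may be as large as `e i - e j`, so that
exchanging two entries is a transfer. -/
def IsTransfer (e e' : ι → R) : Prop :=
  ∃ i j δ, i ≠ j ∧ 0 ≤ δ ∧ δ ≤ e i - e j ∧ e' = e - Pi.single i δ + Pi.single j δ

theorem IsTransfer.comp_equiv {e e' : ι → R} (h : IsTransfer e e') (σ : κ ≃ ι) :
    IsTransfer (e ∘ σ) (e' ∘ σ) := by
  obtain ⟨i, j, δ, hij, hδ, hδ', rfl⟩ := h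
  refine ⟨σ.symm i, σ.symm j, δ, by simpa using hij, hδ, by simpa using hδ', funext fun k => ?_⟩
  simp [Pi.single_apply, Equiv.eq_symm_apply]

variable [IsOrderedAddMonoid R]

theorem isTransfer_comp_swap (e : ι → R) {i j : ι} (hij : i ≠ j) :
    IsTransfer e (e ∘ Equiv.swap i j) := by
  wlog hle : e j ≤ e i generalizing i j
  · rw [Equiv.swap_comm]
    exact this hij.symm (le_of_not_ge hle)
  refine ⟨i, j, e i - e j, hij, sub_nonneg.2 hle, le_rfl, funext fun k => ?_⟩
  rcases eq_or_ne k i with rfl | hki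
  · simp [hij]
  rcases eq_or_ne k j with rfl | hkj
  · simp [hki]
  · simp [hki, hkj, Equiv.swap_apply_of_ne_of_ne]

theorem reflTransGen_isTransfer_comp_perm [Finite ι] (e : ι → R) (π : Equiv.Perm ι) :
    ReflTransGen IsTransfer e (e ∘ π) := by
  induction π using Equiv.Perm.swap_induction_on' with
  | one => exact .refl
  | mul_swap π i j hij ih => exact ih.tail (isTransfer_comp_swap (e ∘ π) hij)

end Transfer

section Dominance

variable {ι R : Type*} [LinearOrder ι] [AddCommGroup R] [LinearOrder R] [IsOrderedAddMonoid R]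
  {d e : ι → R}

theorem exists_lt_of_sum_Iic_le [LocallyFiniteOrderBot ι] {k : ι}
    (hle : ∑ i ∈ Iic k, d i ≤ ∑ i ∈ Iic k, e i) (hk : e k < d k) : ∃ j < k, d j < e j := by
  by_contra! hlt
  refine hle.not_gt (sum_lt_sum (fun i hi => ?_) ⟨k, mem_Iic.2 le_rfl, hk⟩)
  rcases (mem_Iic.1 hi).lt_or_eq with hik | rfl
  exacts [hlt i hik, hk.le]

variable [Fintype ι]

theorem exists_first_lt_of_sum_eq (hsum : ∑ i, d i = ∑ i, e i) (hne : e ≠ d) :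
    ∃ k, e k < d k ∧ ∀ i < k, d i ≤ e i := by
  have hdeficit : ∃ k, e k < d k := by
    by_contra! hle
    exact hne (funext fun i =>
      ((sum_eq_sum_iff_of_le fun i _ => hle i).1 hsum i (mem_univ i)).symm)
  obtain ⟨k, hk, hmin⟩ := wellFounded_lt.has_min {k | e k < d k} hdeficit
  exact ⟨k, hk, fun i hi => not_lt.1 fun hlt => hmin i hlt hi⟩

variable [LocallyFiniteOrderBot ι]

/-- The dominance order: every initial partial sum of `d` is at most that of `e`, and the totals
agree. For weakly decreasing `d` and `e` this says that `e` majorizes `d`. -/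
def IsDominated (d e : ι → R) : Prop :=
  (∀ k, ∑ i ∈ Iic k, d i ≤ ∑ i ∈ Iic k, e i) ∧ ∑ i, d i = ∑ i, e i

-- Initial sums ending before `k` are compared term by term; the others contain both `j` and `k`.
theorem IsDominated.transfer (h : IsDominated d e) {j k : ι} {δ : R} (hjk : j < k)
    (hlt : ∀ i < k, d i ≤ e i) (hδ : δ ≤ e j - d j) :
    IsDominated d (e - Pi.single j δ + Pi.single k δ) := by
  refine ⟨fun m => ?_, by simp [sum_add_distrib, sum_sub_distrib, h.2]⟩
  rcases lt_or_ge m k with hmk | hkm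
  · refine sum_le_sum fun i hi => ?_
    have hik : i < k := (mem_Iic.1 hi).trans_lt hmk
    rcases eq_or_ne i j with rfl | hij
    · simpa [hik.ne] using le_sub_comm.1 hδ
    · simpa [hij, hik.ne] using hlt i hik
  · simpa [sum_add_distrib, sum_sub_distrib, hkm, hjk.le.trans hkm] using h.1 m

theorem IsDominated.exists_isTransfer (h : IsDominated d e) (hd : Antitone d) (hne : e ≠ d) :
    ∃ e', IsTransfer e e' ∧ IsDominated d e' ∧ #{i | e' i ≠ d i} < #{i | e i ≠ d i} := by
  obtain ⟨k, hk, hlt⟩ := exists_first_lt_of_sum_eq h.2 hne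
  obtain ⟨j, hjk, hj⟩ := exists_lt_of_sum_Iic_le (h.1 k) hk
  -- The largest amount that overshoots neither target: it settles coordinate `j` or `k`.
  let δ := min (e j - d j) (d k - e k)
  have hδj : δ ≤ e j - d j := min_le_left _ _
  have hδ : δ ≤ e j - e k :=
    (min_le_right _ _).trans (sub_le_sub_right ((hd hjk.le).trans hj.le) _)
  have hδ0 : 0 ≤ δ := le_min (sub_nonneg.2 hj.le) (sub_nonneg.2 hk.le)
  refine ⟨_, ⟨j, k, δ, hjk.ne, hδ0, hδ, rfl⟩, h.transfer hjk hlt hδj, card_lt_card ?_⟩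
  rw [ssubset_iff_of_subset]
  · rcases min_choice (e j - d j) (d k - e k) with hmin | hmin
    · exact ⟨j, by simpa using hj.ne', by simp [δ, hmin, hjk.ne]⟩
    · exact ⟨k, by simpa using hk.ne, by simp [δ, hmin, hjk.ne']⟩
  · intro i hi
    rcases eq_or_ne i j with rfl | hij
    · simpa using hj.ne'
    rcases eq_or_ne i k with rfl | hik
    · simpa using hk.ne
    · simpa [hij, hik] using hi

theorem IsDominated.reflTransGen_isTransfer {e : ι → R} (h : IsDominated d e) (hd : Antitone d) :
    ReflTransGen IsTransfer e d := by
  by_cases hne : e = d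
  · exact hne ▸ .refl
  · obtain ⟨e', htransfer, hdom, hlt⟩ := h.exists_isTransfer hd hne
    exact .head htransfer (hdom.reflTransGen_isTransfer hd)
termination_by #{i | e i ≠ d i}
decreasing_by exact hlt

end Dominance

section Permutohedron

variable {ι κ R : Type*} [Field R] [LinearOrder R]

/-- The permutohedron of `v`: the convex hull of all rearrangements of `v`. -/
def permutohedron (v : ι → R) : Set (ι → R) :=
  convexHull R {d | ∃ π : Equiv.Perm ι, d = v ∘ π}

theorem comp_mem_permutohedron {v d : ι → R} (hd : d ∈ permutohedron v) (σ τ : κ ≃ ι) :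
    d ∘ σ ∈ permutohedron (v ∘ τ) := by
  have hmem := Set.mem_image_of_mem (LinearMap.funLeft R R σ) hd
  rw [permutohedron, LinearMap.image_convexHull] at hmem
  refine convexHull_mono ?_ hmem
  rintro _ ⟨_, ⟨π, rfl⟩, rfl⟩
  exact ⟨σ.trans (π.trans τ.symm), funext fun i => by simp [LinearMap.funLeft_apply]⟩

variable [IsStrictOrderedRing R]

theorem mulVec_mem_permutohedron [Fintype ι] [DecidableEq ι] {M : Matrix ι ι R}
    (hM : M ∈ doublyStochastic R ι) (v : ι → R) : M *ᵥ v ∈ permutohedron v := by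
  obtain ⟨w, hw0, hw1, rfl⟩ := exists_eq_sum_perm_of_mem_doublyStochastic hM
  simp only [sum_mulVec, smul_mulVec, permMatrix_mulVec]
  exact (convex_convexHull R _).sum_mem (fun π _ => hw0 π) hw1 fun π _ =>
    subset_convexHull R _ ⟨π, rfl⟩

section LinearOrder

variable [Fintype ι] [LinearOrder ι] [LocallyFiniteOrderBot ι]

theorem isDominated_comp_perm_of_antitone {v : ι → R} (hv : Antitone v) (π : Equiv.Perm ι) :
    IsDominated (v ∘ π) v := by
  refine ⟨fun k => ?_, Equiv.sum_comp π v⟩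
  have hmono : Monovary v fun i => if i ≤ k then (1 : R) else 0 :=
    hv.monovary fun a b hab => by grind
  simpa [← sum_filter, filter_ge_eq_Iic] using hmono.sum_comp_perm_mul_le_sum_mul (σ := π)

theorem convex_setOf_isDominated (e : ι → R) : Convex R {d | IsDominated d e} := by
  have hlin (s : Finset ι) : IsLinearMap R fun d : ι → R => ∑ i ∈ s, d i :=
    ⟨fun _ _ => sum_add_distrib, fun c d => (mul_sum s d c).symm⟩
  simp only [IsDominated, Set.ofPred_and, Set.ofPred_forall]
  exact (convex_iInter fun k => convex_halfSpace_le (hlin (Iic k)) _).inter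
    (convex_hyperplane (hlin univ) _)

theorem isDominated_of_mem_permutohedron {v d : ι → R} (hv : Antitone v)
    (hd : d ∈ permutohedron v) : IsDominated d v := by
  refine convexHull_min ?_ (convex_setOf_isDominated v) hd
  rintro _ ⟨π, rfl⟩
  exact isDominated_comp_perm_of_antitone hv π

end LinearOrder

theorem exists_equiv_fin_antitone_comp {α : Type*} [LinearOrder α] [Fintype ι] (f : ι → α) :
    ∃ σ : Fin (Fintype.card ι) ≃ ι, Antitone (f ∘ σ) :=
  let enum := (Fintype.equivFin ι).symm
  ⟨(Tuple.sort (OrderDual.toDual ∘ f ∘ enum)).trans enum,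
    Tuple.monotone_sort (OrderDual.toDual ∘ f ∘ enum)⟩

theorem reflTransGen_isTransfer_of_mem_permutohedron [Finite ι] [DecidableEq ι] {v d : ι → R}
    (hd : d ∈ permutohedron v) : ReflTransGen IsTransfer v d := by
  cases nonempty_fintype ι
  obtain ⟨σ, hσ⟩ := exists_equiv_fin_antitone_comp d
  obtain ⟨τ, hτ⟩ := exists_equiv_fin_antitone_comp v
  have hdom : IsDominated (d ∘ σ) (v ∘ τ) :=
    isDominated_of_mem_permutohedron hτ (comp_mem_permutohedron hd σ τ)
  have hsorted : ReflTransGen IsTransfer (v ∘ σ.symm.trans τ) d := by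
    simpa [onFun, Function.comp_assoc] using (hdom.reflTransGen_isTransfer hσ).lift (· ∘ σ.symm)
      fun _ _ h => h.comp_equiv σ.symm
  exact (reflTransGen_isTransfer_comp_perm v _).trans hsorted

end Permutohedron

section PlaneRotation

variable {ι 𝕜 : Type*} [DecidableEq ι] [RCLike 𝕜]

/-- The rotation by `θ` in the plane of the coordinates `i` and `j`, given by its rows
(a Givens rotation). It is meant for `i ≠ j`. -/
noncomputable def planeRotation (𝕜 : Type*) [RCLike 𝕜] (i j : ι) (θ : ℝ) : Matrix ι ι 𝕜 :=
  of fun k =>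
    if k = i then Pi.single i (Real.cos θ : 𝕜) + Pi.single j (Real.sin θ : 𝕜)
    else if k = j then Pi.single i ((-Real.sin θ : ℝ) : 𝕜) + Pi.single j (Real.cos θ : 𝕜)
    else Pi.single k 1

theorem planeRotation_apply_left (i j : ι) (θ : ℝ) :
    planeRotation 𝕜 i j θ i = Pi.single i (Real.cos θ : 𝕜) + Pi.single j (Real.sin θ : 𝕜) :=
  if_pos rfl

theorem planeRotation_apply_right {i j : ι} (hij : i ≠ j) (θ : ℝ) :
    planeRotation 𝕜 i j θ j =
      Pi.single i ((-Real.sin θ : ℝ) : 𝕜) + Pi.single j (Real.cos θ : 𝕜) :=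
  (if_neg hij.symm).trans (if_pos rfl)

theorem planeRotation_apply_of_ne {i j k : ι} (hki : k ≠ i) (hkj : k ≠ j) (θ : ℝ) :
    planeRotation 𝕜 i j θ k = Pi.single k 1 :=
  (if_neg hki).trans (if_neg hkj)

variable [Fintype ι]

theorem planeRotation_mem_unitaryGroup {i j : ι} (hij : i ≠ j) (θ : ℝ) :
    planeRotation 𝕜 i j θ ∈ unitaryGroup ι 𝕜 := by
  have hcs : (Real.sin θ : 𝕜) ^ 2 + (Real.cos θ : 𝕜) ^ 2 = 1 := by
    exact_mod_cast Real.sin_sq_add_cos_sq θ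
  have cases_index (m : ι) : m = i ∨ m = j ∨ m ≠ i ∧ m ≠ j := by tauto
  refine mem_unitaryGroup_iff.2 (ext fun k l => ?_)
  change planeRotation 𝕜 i j θ k ⬝ᵥ star (planeRotation 𝕜 i j θ l) = _
  rcases cases_index k with rfl | rfl | ⟨hki, hkj⟩ <;>
    rcases cases_index l with rfl | rfl | ⟨hli, hlj⟩ <;>
    simp [planeRotation_apply_left, planeRotation_apply_right, planeRotation_apply_of_ne,
      one_apply, Pi.single_apply, *] <;> grind

theorem single_add_single_dotProduct_mulVec_star {B : Matrix ι ι 𝕜} (hB : B.IsHermitian)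
    (i j : ι) (a b : ℝ) :
    (Pi.single i (a : 𝕜) + Pi.single j (b : 𝕜)) ⬝ᵥ
        B *ᵥ star (Pi.single i (a : 𝕜) + Pi.single j (b : 𝕜)) =
      a ^ 2 * B i i + b ^ 2 * B j j + 2 * a * b * RCLike.re (B i j) := by
  have hadd : B i j + B j i = 2 * RCLike.re (B i j) := by
    rw [← hB.apply j i, RCLike.star_def, RCLike.add_conj]
  simp only [star_add, Pi.star_single, RCLike.star_def, RCLike.conj_ofReal, mulVec_add,
    mulVec_single, op_smul_eq_smul, algebraMap_smul, dotProduct_add, dotProduct_smul,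
    add_dotProduct, single_dotProduct, col_apply, smul_add, RCLike.real_smul_eq_coe_mul]
  linear_combination (a : 𝕜) * b * hadd

theorem exists_cos_sq_add_sin_sq_eq {p q x : ℝ} (hqx : q ≤ x) (hxp : x ≤ p) (r : ℝ) :
    ∃ θ : ℝ, Real.cos θ ^ 2 * p + Real.sin θ ^ 2 * q + 2 * Real.cos θ * Real.sin θ * r = x := by
  let f (θ : ℝ) : ℝ := Real.cos θ ^ 2 * p + Real.sin θ ^ 2 * q + 2 * Real.cos θ * Real.sin θ * r
  have hf : Continuous f := by fun_prop
  exact mem_range_of_exists_le_of_exists_ge hf ⟨Real.pi / 2, by simpa [f]⟩ ⟨0, by simpa [f]⟩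

end PlaneRotation

theorem exists_perm_eq_comp_of_map_univ_eq {ι α : Type*} [Fintype ι] {f g : ι → α}
    (h : univ.val.map f = univ.val.map g) : ∃ π : Equiv.Perm ι, f = g ∘ π := by
  classical
  have hcard (a : α) : Fintype.card {i // f i = a} = Fintype.card {i // g i = a} := by
    simpa [Multiset.count_map, Fintype.card_subtype, Finset.card_def, eq_comm]
      using congrArg (Multiset.count a) h
  exact ⟨Equiv.ofFiberEquiv fun a => Fintype.equivOfCardEq (hcard a),
    funext fun i => (Equiv.ofFiberEquiv_map _ i).symm⟩

section HermitianDiagonals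

variable {ι 𝕜 : Type*} [Fintype ι] [DecidableEq ι] [RCLike 𝕜]

/-- The diagonals of Hermitian matrices over `𝕜` with spectrum `v`. The spectrum, with
multiplicities and up to order, is encoded by the characteristic polynomial. -/
def hermitianDiagonals (𝕜 : Type*) [RCLike 𝕜] (v : ι → ℝ) : Set (ι → ℝ) :=
  {d | ∃ B : Matrix ι ι 𝕜, B.IsHermitian ∧
    B.charpoly = ∏ i, (Polynomial.X - Polynomial.C (v i : 𝕜)) ∧ ∀ i, B i i = d i}

theorem exists_eigenvalues_eq_comp_perm {B : Matrix ι ι 𝕜} (hB : B.IsHermitian) {v : ι → ℝ}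
    (hc : B.charpoly = ∏ i, (Polynomial.X - Polynomial.C (v i : 𝕜))) :
    ∃ π : Equiv.Perm ι, hB.eigenvalues = v ∘ π := by
  have hroots : (∏ i, (Polynomial.X - Polynomial.C (v i : 𝕜))).roots =
      univ.val.map (RCLike.ofReal ∘ v) := by
    simpa [Multiset.map_map] using
      Polynomial.roots_multiset_prod_X_sub_C (univ.val.map (RCLike.ofReal ∘ v : ι → 𝕜))
  refine exists_perm_eq_comp_of_map_univ_eq
    (Multiset.map_injective (RCLike.ofReal_injective (K := 𝕜)) ?_)
  rw [Multiset.map_map, Multiset.map_map, ← hB.roots_charpoly_eq_eigenvalues, hc, hroots]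

theorem map_norm_sq_mem_doublyStochastic {U : Matrix ι ι 𝕜} (hU : U ∈ unitaryGroup ι 𝕜) :
    U.map (‖·‖ ^ 2) ∈ doublyStochastic ℝ ι := by
  refine mem_doublyStochastic_iff_sum.2 ⟨fun i j => sq_nonneg _, fun i => ?_, fun j => ?_⟩
  · have hrow := congrFun₂ (mem_unitaryGroup_iff.1 hU) i i
    simp only [mul_apply, star_apply, RCLike.star_def, RCLike.mul_conj, one_apply_eq] at hrow
    exact_mod_cast hrow
  · have hcol := congrFun₂ (mem_unitaryGroup_iff'.1 hU) j j
    simp only [mul_apply, star_apply, RCLike.star_def, RCLike.conj_mul, one_apply_eq] at hcol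
    exact_mod_cast hcol

theorem mul_diagonal_mul_star_apply_self (U : Matrix ι ι 𝕜) (v : ι → ℝ) (i : ι) :
    (U * diagonal (RCLike.ofReal ∘ v) * star U : Matrix ι ι 𝕜) i i =
      ((U.map (‖·‖ ^ 2) *ᵥ v) i : ℝ) := by
  rw [mul_apply]
  simp only [mul_diagonal, star_apply, mulVec, dotProduct, map_apply, Function.comp_apply]
  push_cast
  refine sum_congr rfl fun j _ => ?_
  rw [← RCLike.mul_conj, RCLike.star_def]
  ring

theorem hermitianDiagonals_subset_permutohedron (v : ι → ℝ) :
    hermitianDiagonals 𝕜 v ⊆ permutohedron v := by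
  rintro d ⟨B, hB, hc, hd⟩
  obtain ⟨π, hπ⟩ := exists_eigenvalues_eq_comp_perm hB hc
  let U := hB.eigenvectorUnitary
  have hdiag : d = (U : Matrix ι ι 𝕜).map (‖·‖ ^ 2) *ᵥ hB.eigenvalues := by
    funext i
    apply RCLike.ofReal_injective (K := 𝕜)
    rw [← hd, ← mul_diagonal_mul_star_apply_self]
    exact congrFun₂ hB.spectral_theorem i i
  have hmem : d ∈ permutohedron (v ∘ π) := by
    rw [hdiag, hπ]
    exact mulVec_mem_permutohedron (map_norm_sq_mem_doublyStochastic U.2) _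
  simpa [Function.comp_assoc] using comp_mem_permutohedron hmem (.refl ι) π.symm

theorem conj_unitary_mem_hermitianDiagonals {v d : ι → ℝ} {B U : Matrix ι ι 𝕜}
    (hB : B.IsHermitian) (hc : B.charpoly = ∏ i, (Polynomial.X - Polynomial.C (v i : 𝕜)))
    (hU : U ∈ unitaryGroup ι 𝕜) (hd : ∀ k, U k ⬝ᵥ B *ᵥ star (U k) = d k) :
    d ∈ hermitianDiagonals 𝕜 v := by
  refine ⟨U * B * star U, isHermitian_mul_mul_conjTranspose U hB, ?_, fun k => ?_⟩
  · rw [charpoly_mul_comm, ← Matrix.mul_assoc, mem_unitaryGroup_iff'.1 hU, Matrix.one_mul, hc]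
  · exact (mul_mul_apply U B (star U) k k).trans (hd k)

theorem IsTransfer.mem_hermitianDiagonals {v d d' : ι → ℝ} (h : IsTransfer d d')
    (hd : d ∈ hermitianDiagonals 𝕜 v) : d' ∈ hermitianDiagonals 𝕜 v := by
  obtain ⟨i, j, δ, hij, hδ0, hδ, rfl⟩ := h
  obtain ⟨B, hB, hc, hdB⟩ := hd
  obtain ⟨θ, hθ⟩ := exists_cos_sq_add_sin_sq_eq (show d j ≤ d i - δ by linarith)
    (show d i - δ ≤ d i by linarith) (RCLike.re (B i j))
  refine conj_unitary_mem_hermitianDiagonals hB hc (planeRotation_mem_unitaryGroup hij θ)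
    fun k => ?_
  rcases eq_or_ne k i with rfl | hki
  · rw [planeRotation_apply_left, single_add_single_dotProduct_mulVec_star hB, hdB, hdB]
    simp only [Pi.add_apply, Pi.sub_apply, Pi.single_eq_same, Pi.single_eq_of_ne hij, add_zero]
    exact_mod_cast hθ
  rcases eq_or_ne k j with rfl | hkj
  · have hθ' : (-Real.sin θ) ^ 2 * d i + Real.cos θ ^ 2 * d k +
        2 * -Real.sin θ * Real.cos θ * RCLike.re (B i k) = d k + δ := by
      linear_combination (d i + d k) * Real.sin_sq_add_cos_sq θ - hθ
    rw [planeRotation_apply_right hij, single_add_single_dotProduct_mulVec_star hB, hdB, hdB]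
    simp only [Pi.add_apply, Pi.sub_apply, Pi.single_eq_same, Pi.single_eq_of_ne hki, sub_zero]
    exact_mod_cast hθ'
  · simp [planeRotation_apply_of_ne hki hkj, hki, hkj, hdB]

theorem self_mem_hermitianDiagonals (v : ι → ℝ) : v ∈ hermitianDiagonals 𝕜 v :=
  ⟨diagonal (RCLike.ofReal ∘ v), isHermitian_diagonal_iff.2 fun i => RCLike.conj_ofReal (v i),
    charpoly_diagonal _, fun _ => diagonal_apply_eq _ _⟩

theorem permutohedron_subset_hermitianDiagonals (v : ι → ℝ) :
    permutohedron v ⊆ hermitianDiagonals 𝕜 v := by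
  intro d hd
  have hreach : ReflTransGen IsTransfer v d := reflTransGen_isTransfer_of_mem_permutohedron hd
  clear hd
  induction hreach with
  | refl => exact self_mem_hermitianDiagonals v
  | tail _ h ih => exact h.mem_hermitianDiagonals ih

end HermitianDiagonals

theorem stmt13_general (𝕜 : Type*) [RCLike 𝕜] {ι : Type*} [Fintype ι] [DecidableEq ι]
    (lam : ι → ℝ) : hermitianDiagonals 𝕜 lam = permutohedron lam :=
  (hermitianDiagonals_subset_permutohedron lam).antisymm
    (permutohedron_subset_hermitianDiagonals lam)

/-- Kostant/Schur–Horn for `(SU(n), SO(n))`.  For a weakly decreasing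
`λ ∈ ℝⁿ`, the set of diagonals of real symmetric matrices with spectrum `λ` equals the convex
hull of the orbit of `λ` under permutations of coordinates.  (Here `spec B = λ` is expressed
by the characteristic polynomial being `∏ (X − λᵢ)`.) -/
theorem stmt13 (n : ℕ) (hn : 1 ≤ n) (lam : Fin n → ℝ) (hlam : Antitone lam) :
    {d : Fin n → ℝ | ∃ B : Matrix (Fin n) (Fin n) ℝ, B.IsSymm ∧
        B.charpoly = ∏ i : Fin n, (Polynomial.X - Polynomial.C (lam i)) ∧
        d = fun i => B i i}
      = convexHull ℝ {d : Fin n → ℝ | ∃ π : Equiv.Perm (Fin n), d = lam ∘ π} := by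
  simpa [hermitianDiagonals, permutohedron, IsHermitian, Matrix.IsSymm, funext_iff, eq_comm]
    using stmt13_general ℝ lam
end
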